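/- There exist a finitely presented group G which has no subgroup isomorphic to the Baumslag–Solitar group BS(m,n) for any nonzero integers m and n (in particular no subgroup isomorphic to ℤ × ℤ), and a surjective group homomorphism φ : G → ℤ, such that the kernel of φ is finitely presented but is not of type FP₃ over ℤ. -/

import Mathlib

/-- The augmentation ring homomorphism `ℤH → ℤ` sending each group element to `1`. -/
noncomputable def augmentationMap (H : Type) [Group H] : MonoidAlgebra ℤ H →+* ℤ :=
  (MonoidAlgebra.lift ℤ ℤ H 1).toRingHom

/-- A group `H` is of type `FP₂` over `ℤ`: there is an exact sequence
`P₂ → P₁ → P₀ → ℤ → 0` of `ℤH`-modules with each `Pᵢ` finitely generated projective,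
where `ℤ` carries the trivial `H`-action (via the augmentation map). -/
def IsTypeFP2 (H : Type) [Group H] : Prop :=
  letI : Module (MonoidAlgebra ℤ H) ℤ := Module.compHom ℤ (augmentationMap H)
  ∃ (P₂ P₁ P₀ : Type) (_ : AddCommGroup P₂) (_ : AddCommGroup P₁) (_ : AddCommGroup P₀)
    (_ : Module (MonoidAlgebra ℤ H) P₂) (_ : Module (MonoidAlgebra ℤ H) P₁)
    (_ : Module (MonoidAlgebra ℤ H) P₀),
    Module.Finite (MonoidAlgebra ℤ H) P₂ ∧ Module.Projective (MonoidAlgebra ℤ H) P₂ ∧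
    Module.Finite (MonoidAlgebra ℤ H) P₁ ∧ Module.Projective (MonoidAlgebra ℤ H) P₁ ∧
    Module.Finite (MonoidAlgebra ℤ H) P₀ ∧ Module.Projective (MonoidAlgebra ℤ H) P₀ ∧
    ∃ (d₂ : P₂ →ₗ[MonoidAlgebra ℤ H] P₁) (d₁ : P₁ →ₗ[MonoidAlgebra ℤ H] P₀)
      (ε : P₀ →ₗ[MonoidAlgebra ℤ H] ℤ),
      Function.Surjective ε ∧
      LinearMap.range d₁ = LinearMap.ker ε ∧
      LinearMap.range d₂ = LinearMap.ker d₁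

/-- A group `H` is finitely presented: it is isomorphic to a presented group
`⟨x₁,…,xₙ | R⟩` with `R` a finite set of relators. -/
def IsFinitelyPresented (H : Type) [Group H] : Prop :=
  ∃ (n : ℕ) (R : Set (FreeGroup (Fin n))), R.Finite ∧ Nonempty (H ≃* PresentedGroup R)

/-- The single relator `y⁻¹ xᵐ y x⁻ⁿ` of the Baumslag–Solitar group `BS(m,n)`. -/
def BSRels (m n : ℤ) : Set (FreeGroup (Fin 2)) :=
  {(FreeGroup.of 1)⁻¹ * (FreeGroup.of 0) ^ m * FreeGroup.of 1 * (FreeGroup.of 0) ^ (-n)}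

/-- The Baumslag–Solitar group `BS(m,n) = ⟨x, y | y⁻¹xᵐyx⁻ⁿ⟩`. -/
abbrev BS (m n : ℤ) : Type := PresentedGroup (BSRels m n)

/-- `G` has no subgroup isomorphic to a Baumslag–Solitar group `BS(m,n)`
with `m, n` nonzero. -/
def HasNoBSSubgroup (G : Type) [Group G] : Prop :=
  ∀ m n : ℤ, m ≠ 0 → n ≠ 0 → ∀ K : Subgroup G, ¬ Nonempty (K ≃* BS m n)

/-- A group `H` is of type `FP₃` over `ℤ`: there is an exact sequence
`P₃ → P₂ → P₁ → P₀ → ℤ → 0` of `ℤH`-modules with each `Pᵢ` finitely generated projective,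
where `ℤ` carries the trivial `H`-action (via the augmentation map). -/
def IsTypeFP3 (H : Type) [Group H] : Prop :=
  letI : Module (MonoidAlgebra ℤ H) ℤ := Module.compHom ℤ (augmentationMap H)
  ∃ (P₃ P₂ P₁ P₀ : Type)
    (_ : AddCommGroup P₃) (_ : AddCommGroup P₂) (_ : AddCommGroup P₁) (_ : AddCommGroup P₀)
    (_ : Module (MonoidAlgebra ℤ H) P₃) (_ : Module (MonoidAlgebra ℤ H) P₂)
    (_ : Module (MonoidAlgebra ℤ H) P₁) (_ : Module (MonoidAlgebra ℤ H) P₀),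
    Module.Finite (MonoidAlgebra ℤ H) P₃ ∧ Module.Projective (MonoidAlgebra ℤ H) P₃ ∧
    Module.Finite (MonoidAlgebra ℤ H) P₂ ∧ Module.Projective (MonoidAlgebra ℤ H) P₂ ∧
    Module.Finite (MonoidAlgebra ℤ H) P₁ ∧ Module.Projective (MonoidAlgebra ℤ H) P₁ ∧
    Module.Finite (MonoidAlgebra ℤ H) P₀ ∧ Module.Projective (MonoidAlgebra ℤ H) P₀ ∧
    ∃ (d₃ : P₃ →ₗ[MonoidAlgebra ℤ H] P₂) (d₂ : P₂ →ₗ[MonoidAlgebra ℤ H] P₁)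
      (d₁ : P₁ →ₗ[MonoidAlgebra ℤ H] P₀) (ε : P₀ →ₗ[MonoidAlgebra ℤ H] ℤ),
      Function.Surjective ε ∧
      LinearMap.range d₁ = LinearMap.ker ε ∧
      LinearMap.range d₂ = LinearMap.ker d₁ ∧
      LinearMap.range d₃ = LinearMap.ker d₂

namespace FPC

/-- weight of a letter -/
def wt {E : Type} : Fin 7 ⊕ E → ℕ
  | Sum.inl _ => 1
  | Sum.inr _ => 2

def Wt {E : Type} (w : List (Fin 7 ⊕ E)) : ℕ := (w.map wt).sum

def cw {Γ E : Type} [Group Γ] (x : Fin 7 ⊕ E → Γ) (w : List (Fin 7 ⊕ E)) (c : Γ) : Γ :=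
  (w.map x).prod * c * ((w.map x).prod)⁻¹

open Classical in
noncomputable def linsupp {E : Type} (w : List (Fin 7 ⊕ E)) : Finset (Fin 7) :=
  Finset.univ.filter (fun i => Sum.inl i ∈ w)

section
variable {Γ E : Type} [Group Γ] (x : Fin 7 ⊕ E → Γ) (C : Set Γ)

@[simp] lemma Wt_nil : Wt ([] : List (Fin 7 ⊕ E)) = 0 := rfl
@[simp] lemma Wt_cons (a : Fin 7 ⊕ E) (w) : Wt (a :: w) = wt a + Wt w := by simp [Wt]
@[simp] lemma Wt_append (v w : List (Fin 7 ⊕ E)) : Wt (v ++ w) = Wt v + Wt w := by simp [Wt]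
lemma wt_pos (a : Fin 7 ⊕ E) : 1 ≤ wt a := by cases a <;> simp [wt]
lemma Wt_perm {v w : List (Fin 7 ⊕ E)} (h : v.Perm w) : Wt v = Wt w := (h.map wt).sum_eq

lemma length_le_Wt (w : List (Fin 7 ⊕ E)) : w.length ≤ Wt w := by
  induction w with
  | nil => simp
  | cons a w ih => have := wt_pos a; simp; omega

@[simp] lemma cw_nil (c : Γ) : cw x [] c = c := by simp [cw]
lemma cw_cons (a) (w) (c : Γ) : cw x (a :: w) c = x a * cw x w c * (x a)⁻¹ := by
  simp [cw, mul_assoc]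
lemma cw_append (v w) (c : Γ) : cw x (v ++ w) c = cw x v (cw x w c) := by
  simp [cw, mul_assoc]

lemma conj_commute {a b g : Γ} (h : Commute a b) : Commute (g * a * g⁻¹) (g * b * g⁻¹) := by
  have : Commute (MulAut.conj g a) (MulAut.conj g b) := h.map (MulAut.conj g)
  simpa using this

lemma commute_closure {S : Set Γ} {y z : Γ} (hy : y ∈ Subgroup.closure S)
    (h : ∀ s ∈ S, Commute s z) : Commute y z := by
  have : Subgroup.closure S ≤ Subgroup.centralizer {z} := by
    rw [Subgroup.closure_le]
    intro s hs
    rw [SetLike.mem_coe, Subgroup.mem_centralizer_singleton_iff]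
    exact (h s hs)
  exact Subgroup.mem_centralizer_singleton_iff.1 (this hy)

lemma commute_cw_closure {S : Set Γ} {y z : Γ} (b) (hy : y ∈ Subgroup.closure S)
    (h : ∀ s ∈ S, Commute (cw x b s) z) : Commute (cw x b y) z := by
  set g := (b.map x).prod
  have h2 : ∀ s ∈ S, Commute s (g⁻¹ * z * g) := by
    intro s hs
    have := conj_commute (g := g⁻¹) (h s hs)
    simpa [cw, mul_assoc, g] using this
  have := conj_commute (g := g) (commute_closure hy h2)
  simpa [cw, mul_assoc, g] using this

structure Hyp : Prop where
  h0 : x (Sum.inl 0) = 1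
  hC : ∀ a b, x a * x b * (x a)⁻¹ * (x b)⁻¹ ∈ C
  hL : ∀ c ∈ C, ∀ i : Fin 7, ∀ S : Finset (Fin 7), S.card = 4 →
    x (Sum.inl i) * c * (x (Sum.inl i))⁻¹ ∈
      Subgroup.closure {y | ∃ j ∈ S, y = x (Sum.inl j) * c * (x (Sum.inl j))⁻¹}
  hE : ∀ c ∈ C, ∀ e : E, ∀ S : Finset (Fin 7), S.card = 4 →
    x (Sum.inr e) * c * (x (Sum.inr e))⁻¹ ∈
      Subgroup.closure {y | ∃ j ∈ S, ∃ k ∈ S,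
        y = (x (Sum.inl j) * x (Sum.inl k)) * c * (x (Sum.inl j) * x (Sum.inl k))⁻¹}

def HH (d : ℕ) : Prop := ∀ v w, Wt v ≤ d → Wt w ≤ d → ∀ c ∈ C, ∀ c' ∈ C,
  Commute (cw x v c) (cw x w c')

def Perms (d : ℕ) : Prop := ∀ v w, v.Perm w → Wt v ≤ d → ∀ c ∈ C, cw x v c = cw x w c

variable {x C}

lemma Perms_of (hyp : Hyp x C) (d : ℕ)
    (hz : ∀ z ∈ C, ∀ w, Wt w ≤ d → ∀ c ∈ C, Commute z (cw x w c)) : Perms x C d := by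
  intro v w h hv c hc
  induction h with
  | nil => rfl
  | cons a h ih => 
    rw [cw_cons, cw_cons, ih]
    simp at hv; omega
  | swap a b l =>
    have h1 := hz _ (hyp.hC a b) (b :: a :: l) (by simpa using hv) c hc
    have h2 : cw x (a :: b :: l) c = (x a * x b * (x a)⁻¹ * (x b)⁻¹) * cw x (b :: a :: l) c *
      (x a * x b * (x a)⁻¹ * (x b)⁻¹)⁻¹ := by
      simp only [cw_cons]; group
    rw [h2, h1.eq]; group
  | trans h1 h2 ih1 ih2 =>
    rw [ih1 hv, ih2 (by rwa [← Wt_perm h1])]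

lemma pad (hyp : Hyp x C) (v) (c : Γ) (d : ℕ) (hd : Wt v ≤ d) :
    ∃ v', Wt v' = d ∧ cw x v' c = cw x v c := by
  induction d with
  | zero => exact ⟨v, by omega, rfl⟩
  | succ d ih =>
    rcases Nat.lt_or_ge d (Wt v) with h | h
    · exact ⟨v, by omega, rfl⟩
    · obtain ⟨v', h1, h2⟩ := ih h
      refine ⟨Sum.inl 0 :: v', by simp [wt, h1]; omega, ?_⟩
      rw [cw_cons, hyp.h0, h2]; simp

lemma expandL (hyp : Hyp x C) (b) (i : Fin 7) (S : Finset (Fin 7)) (hS : S.card = 4) (c) (hc : c ∈ C)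
    (z : Γ) (h : ∀ j ∈ S, Commute (cw x (b ++ [Sum.inl j]) c) z) :
    Commute (cw x (b ++ [Sum.inl i]) c) z := by
  rw [cw_append, cw_cons, cw_nil]
  refine commute_cw_closure x b (hyp.hL c hc i S hS) ?_
  rintro s ⟨j, hj, rfl⟩
  have := h j hj
  rwa [cw_append, cw_cons, cw_nil] at this

lemma expandE (hyp : Hyp x C) (b) (e : E) (S : Finset (Fin 7)) (hS : S.card = 4) (c) (hc : c ∈ C)
    (z : Γ) (h : ∀ j ∈ S, ∀ k ∈ S, Commute (cw x (b ++ [Sum.inl j, Sum.inl k]) c) z) :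
    Commute (cw x (b ++ [Sum.inr e]) c) z := by
  rw [cw_append, cw_cons, cw_nil]
  refine commute_cw_closure x b (hyp.hE c hc e S hS) ?_
  rintro s ⟨j, hj, k, hk, rfl⟩
  have := h j hj k hk
  rw [cw_append, cw_cons, cw_cons, cw_nil] at this
  simpa [mul_assoc] using this

lemma mem_linsupp {w : List (Fin 7 ⊕ E)} {i} : i ∈ linsupp w ↔ Sum.inl i ∈ w := by
  simp [linsupp]

lemma perm_snoc {α : Type} {a : α} {l : List α} (h : a ∈ l) : ∃ b, l.Perm (b ++ [a]) := by
  obtain ⟨s, t, rfl⟩ := List.append_of_mem h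
  refine ⟨s ++ t, ?_⟩
  rw [List.append_assoc]
  refine List.Perm.append_left s ?_
  exact (List.perm_append_singleton a t).symm

lemma exists_dup {α : Type} (v : List α) (hn : ¬ v.Nodup) :
    ∃ a b, v.Perm (b ++ [a]) ∧ a ∈ b := by
  classical
  rw [List.nodup_iff_count_le_one] at hn
  push Not at hn
  obtain ⟨a, ha⟩ := hn
  have hav : a ∈ v := List.count_pos_iff.1 (by omega)
  obtain ⟨b, hb⟩ := perm_snoc hav
  have hc : b.count a + 1 = v.count a := by
    rw [hb.count_eq]; simp
  have hab : a ∈ b := List.count_pos_iff.1 (by omega)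
  exact ⟨a, b, hb, hab⟩

/-- a word of weight ≥ 4 with small linear support has an extra letter or a repeated letter -/
lemma exists_repeat (v : List (Fin 7 ⊕ E)) (hv : 4 ≤ Wt v) (hs : (linsupp v).card < 4) :
    (∃ b e, v.Perm (b ++ [Sum.inr e])) ∨ (∃ b i, v.Perm (b ++ [Sum.inl i]) ∧ Sum.inl i ∈ b) := by
  classical
  by_cases hE : ∃ e, Sum.inr e ∈ v
  · obtain ⟨e, he⟩ := hE
    obtain ⟨b, hb⟩ := perm_snoc he
    exact Or.inl ⟨b, e, hb⟩
  right
  by_cases hn : v.Nodup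
  · exfalso
    have hall : ∀ a ∈ v, ∃ i, a = Sum.inl i := by
      intro a ha
      cases a with
      | inl i => exact ⟨i, rfl⟩
      | inr e => exact (hE ⟨e, ha⟩).elim
    have h1 : Wt v = v.length := by
      clear hv hs hE hn
      induction v with
      | nil => simp
      | cons a v ih =>
        obtain ⟨i, rfl⟩ := hall a (by simp)
        simp [wt, ih (fun a ha => hall a (by simp [ha]))]; omega
    have h2 : v.toFinset ⊆ (linsupp v).image Sum.inl := by
      intro a ha
      obtain ⟨i, rfl⟩ := hall a (by simpa using ha)
      simp only [Finset.mem_image]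
      exact ⟨i, mem_linsupp.2 (by simpa using ha), rfl⟩
    have h3 := Finset.card_le_card h2
    rw [List.toFinset_card_of_nodup hn] at h3
    have := Finset.card_image_le (s := linsupp v) (f := (Sum.inl : Fin 7 → Fin 7 ⊕ E))
    omega
  · obtain ⟨a, b, hb, hab⟩ := exists_dup v hn
    have hav : a ∈ v := hb.symm.subset (by simp)
    cases a with
    | inl i => exact ⟨b, i, hb, hab⟩
    | inr e => exact (hE ⟨e, hav⟩).elim

lemma grow (hyp : Hyp x C) (D W : ℕ) (hD : 4 ≤ D) (hW : 1 ≤ W) (hP : Perms x C D)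
    (hshare : ∀ v w, Wt v = D → Wt w ≤ W → (∃ a, a ∈ v ∧ a ∈ w) → ∀ c ∈ C, ∀ c' ∈ C,
      Commute (cw x v c) (cw x w c')) :
    ∀ v w, Wt v ≤ D → Wt w ≤ W → ∀ c ∈ C, ∀ c' ∈ C, Commute (cw x v c) (cw x w c') := by
  -- exact weight
  suffices H : ∀ n : ℕ, ∀ v, 7 - (linsupp v).card ≤ n → Wt v = D → ∀ w, Wt w = W →
      ∀ c ∈ C, ∀ c' ∈ C, Commute (cw x v c) (cw x w c') by
    intro v w hv hw c hc c' hc'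
    obtain ⟨v', hv', e1⟩ := pad hyp v c D hv
    obtain ⟨w', hw', e2⟩ := pad hyp w c' W hw
    rw [← e1, ← e2]
    exact H 7 v' (by omega) hv' w' hw' c hc c' hc'
  intro n
  induction n with
  | zero =>
    intro v hv hvD w hw c hc c' hc'
    have hcard : (linsupp v).card = 7 := by
      have := (linsupp v).card_le_univ; simp at this; omega
    have hu : linsupp v = Finset.univ := by
      rw [← Finset.card_eq_iff_eq_univ, hcard]; simp
    obtain ⟨S, -, hS⟩ := Finset.exists_subset_card_eq (s := (Finset.univ : Finset (Fin 7))) (n := 4) (by simp)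
    have hm : ∀ j, Sum.inl j ∈ v := fun j => mem_linsupp.1 (by rw [hu]; simp)
    rcases List.eq_nil_or_concat w with rfl | ⟨b, g, rfl⟩
    · simp at hw; omega
    · rw [List.concat_eq_append] at hw ⊢
      cases g with
      | inl i => 
        refine (expandL hyp b i S hS c' hc' _ fun j _ => ?_).symm
        refine (hshare v _ hvD (by simp [wt] at hw ⊢; omega) ⟨Sum.inl j, hm j, by simp⟩ c hc c' hc').symm
      | inr e => 
        refine (expandE hyp b e S hS c' hc' _ fun j _ k _ => ?_).symm
        refine (hshare v _ hvD (by simp [wt] at hw ⊢; omega) ⟨Sum.inl j, hm j, by simp⟩ c hc c' hc').symm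
  | succ n ih =>
    intro v hv hvD w hw c hc c' hc'
    by_cases h4 : 4 ≤ (linsupp v).card
    · obtain ⟨S, hSs, hS⟩ := Finset.exists_subset_card_eq h4
      have hm : ∀ j ∈ S, Sum.inl j ∈ v := fun j hj => mem_linsupp.1 (hSs hj)
      rcases List.eq_nil_or_concat w with rfl | ⟨b, g, rfl⟩
      · simp at hw; omega
      · rw [List.concat_eq_append] at hw ⊢
        cases g with
        | inl i => 
          refine (expandL hyp b i S hS c' hc' _ fun j hj => ?_).symm
          refine (hshare v _ hvD (by simp [wt] at hw ⊢; omega) ⟨Sum.inl j, hm j hj, by simp⟩ c hc c' hc').symm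
        | inr e => 
          refine (expandE hyp b e S hS c' hc' _ fun j hj k _ => ?_).symm
          refine (hshare v _ hvD (by simp [wt] at hw ⊢; omega) ⟨Sum.inl j, hm j hj, by simp⟩ c hc c' hc').symm
    · have hcc : 4 ≤ (linsupp v)ᶜ.card := by
        rw [Finset.card_compl]; simp; omega
      obtain ⟨S, hSs, hS⟩ := Finset.exists_subset_card_eq hcc
      have key : ∀ v' : List (Fin 7 ⊕ E), (linsupp v ⊂ linsupp v') → 7 - (linsupp v').card ≤ n := by
        intro v' h
        have := Finset.card_lt_card h
        omega
      rcases exists_repeat v (by omega) (by omega) with ⟨b, e, hb⟩ | ⟨b, i, hb, hib⟩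
      · rw [hP v _ hb hvD.le c hc]
        have hwb := Wt_perm hb
        refine expandE hyp b e S hS c hc _ fun j hj k _ => ?_
        refine ih _ (key _ ?_) (by simp [wt] at hwb ⊢; omega) w hw c hc c' hc'
        rw [Finset.ssubset_iff_of_subset]
        · refine ⟨j, mem_linsupp.2 (by simp), ?_⟩
          simpa using hSs hj
        · intro i hi
          rw [mem_linsupp] at hi ⊢
          have := hb.subset hi
          simp at this
          simp [this]
      · rw [hP v _ hb hvD.le c hc]
        have hwb := Wt_perm hb
        refine expandL hyp b i S hS c hc _ fun j hj => ?_
        refine ih _ (key _ ?_) (by simp [wt] at hwb ⊢; omega) w hw c hc c' hc'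
        rw [Finset.ssubset_iff_of_subset]
        · refine ⟨j, mem_linsupp.2 (by simp), ?_⟩
          simpa using hSs hj
        · intro i' hi
          rw [mem_linsupp] at hi ⊢
          have := hb.subset hi
          simp at this
          rcases this with h | h
          · simp [h]
          · subst h; simp [hib]

lemma HH_mono {d d' : ℕ} (h : d' ≤ d) (H : HH x C d) : HH x C d' :=
  fun v w hv hw => H v w (hv.trans h) (hw.trans h)

lemma HH_perms (hyp : Hyp x C) {d : ℕ} (H : HH x C d) : Perms x C d := by
  apply Perms_of hyp
  intro z hz w hw c hc
  simpa using H [] w (by simp) hw z hz c hc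

lemma share_head {d : ℕ} (H : HH x C d) (a v w) (hv : Wt (a :: v) ≤ d + 1) (hw : Wt (a :: w) ≤ d + 1)
    (c) (hc : c ∈ C) (c') (hc' : c' ∈ C) : Commute (cw x (a :: v) c) (cw x (a :: w) c') := by
  rw [cw_cons, cw_cons]
  apply conj_commute
  have := wt_pos a
  simp at hv hw
  exact H v w (by omega) (by omega) c hc c' hc'

lemma perm_head {α : Type} {a : α} {l : List α} (h : a ∈ l) : ∃ b, l.Perm (a :: b) := by
  obtain ⟨s, t, rfl⟩ := List.append_of_mem h
  exact ⟨s ++ t, List.perm_middle⟩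

lemma step (hyp : Hyp x C) {d : ℕ} (hd : 4 ≤ d) (H : HH x C d) : HH x C (d + 1) := by
  have hP := HH_perms hyp H
  have h1 : ∀ v w, Wt v ≤ d → Wt w ≤ d + 1 → ∀ c ∈ C, ∀ c' ∈ C,
      Commute (cw x v c) (cw x w c') := by
    refine grow hyp d (d + 1) hd (by omega) hP ?_
    rintro v w hv hw ⟨h, hhv, hhw⟩ c hc c' hc'
    obtain ⟨v', hv'⟩ := perm_head hhv
    have ev := hP _ _ hv' hv.le c hc
    have hwv' := Wt_perm hv'
    cases w with
    | nil => simp at hhw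
    | cons g t =>
      by_cases hg : h = g
      · subst hg
        rw [ev]
        exact share_head H h v' t (by omega) hw c hc c' hc'
      · have ht : h ∈ t := by simpa [hg] using hhw
        obtain ⟨t', ht'⟩ := perm_head ht
        have hwt' := Wt_perm ht'
        have hgp := wt_pos g
        have e1 : cw x (g :: t) c' = cw x (g :: h :: t') c' := by
          rw [cw_cons, hP _ _ ht' (by simp at hw; omega) c' hc', ← cw_cons]
        have h2 : cw x (g :: h :: t') c' = (x g * x h * (x g)⁻¹ * (x h)⁻¹) *
            cw x (h :: g :: t') c' * (x g * x h * (x g)⁻¹ * (x h)⁻¹)⁻¹ := by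
          simp only [cw_cons]; group
        have hz : Commute (cw x v c) (x g * x h * (x g)⁻¹ * (x h)⁻¹) := by
          simpa using H v [] hv.le (by simp) c hc _ (hyp.hC g h)
        have h3 : Commute (cw x v c) (cw x (h :: g :: t') c') := by
          rw [ev]
          refine share_head H h v' (g :: t') (by omega) ?_ c hc c' hc'
          simp at hw hwt' ⊢; omega
        rw [e1, h2]
        exact (hz.mul_right h3).mul_right hz.inv_right
  have hP' : Perms x C (d + 1) := by
    apply Perms_of hyp
    intro z hz w hw c hc
    simpa using h1 [] w (by simp) hw z hz c hc
  refine grow hyp (d + 1) (d + 1) (by omega) (by omega) hP' ?_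
  rintro v w hv hw ⟨h, hhv, hhw⟩ c hc c' hc'
  obtain ⟨v', hv'⟩ := perm_head hhv
  obtain ⟨w', hw'⟩ := perm_head hhw
  have e1 := Wt_perm hv'
  have e2 := Wt_perm hw'
  rw [hP' _ _ hv' hv.le c hc, hP' _ _ hw' hw c' hc']
  exact share_head H h v' w' (by omega) (by omega) c hc c' hc'

theorem all_HH (hyp : Hyp x C) (H : HH x C 4) (v w) (c) (hc : c ∈ C) (c') (hc' : c' ∈ C) :
    Commute (cw x v c) (cw x w c') := by
  have : ∀ n, HH x C (4 + n) := by
    intro n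
    induction n with
    | zero => exact H
    | succ n ih => exact step hyp (Nat.le_add_right 4 n) ih
  exact this (Wt v + Wt w) v w (by omega) (by omega) c hc c' hc'

end
end FPC

namespace FPC
open scoped commutatorElement
section
variable {Γ E : Type} [Group Γ] {x : Fin 7 ⊕ E → Γ} {C : Set Γ}

def Npos (x : Fin 7 ⊕ E → Γ) (C : Set Γ) : Subgroup Γ :=
  Subgroup.closure {y | ∃ w, ∃ c ∈ C, y = cw x w c}

lemma Npos_conj (w) {n : Γ} (hn : n ∈ Npos x C) : cw x w n ∈ Npos x C := by
  have : Npos x C ≤ (Npos x C).comap (MulAut.conj (w.map x).prod).toMonoidHom := by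
    unfold Npos
    rw [Subgroup.closure_le]
    rintro _ ⟨v, c, hc, rfl⟩
    refine Subgroup.subset_closure ⟨w ++ v, c, hc, ?_⟩
    rw [cw_append]; simp [cw]
  have := this hn
  simpa [cw] using this

lemma Npos_comm (hyp : Hyp x C) (H : HH x C 4) {a b : Γ} (ha : a ∈ Npos x C) (hb : b ∈ Npos x C) :
    Commute a b := by
  refine commute_closure ha ?_
  rintro _ ⟨w, c, hc, rfl⟩
  refine (commute_closure hb ?_).symm
  rintro _ ⟨w', c', hc', rfl⟩
  exact all_HH hyp H _ _ _ hc' _ hc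

lemma Npos_swap (hyp : Hyp x C) (p : List (Fin 7 ⊕ E)) (a) :
    (p.map x).prod * x a * ((p.map x).prod)⁻¹ * (x a)⁻¹ ∈ Npos x C := by
  induction p with
  | nil => simp
  | cons b p ih =>
    have h1 : cw x [b] ((p.map x).prod * x a * ((p.map x).prod)⁻¹ * (x a)⁻¹) ∈ Npos x C := Npos_conj _ ih
    have h2 : x b * x a * (x b)⁻¹ * (x a)⁻¹ ∈ Npos x C :=
      Subgroup.subset_closure ⟨[], _, hyp.hC b a, by simp⟩
    have := mul_mem h1 h2
    convert this using 1
    simp [cw, mul_assoc]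

lemma normal_form (hyp : Hyp x C) (gens : Set Γ) (hg : gens ⊆ Set.range x ∪ C)
    (htop : Subgroup.closure gens = ⊤) (g : Γ) :
    ∃ p p' : List (Fin 7 ⊕ E), ∃ n ∈ Npos x C, (p.map x).prod * g = n * (p'.map x).prod := by
  have hgm : g ∈ Subgroup.closure gens := by rw [htop]; trivial
  induction hgm using Subgroup.closure_induction_left with
  | one => exact ⟨[], [], 1, one_mem _, by simp⟩
  | mul_left s hs g' _ ih =>
    obtain ⟨p, p', n, hn, e⟩ := ih
    rcases hg hs with ⟨a, rfl⟩ | hc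
    · refine ⟨p, a :: p', (p.map x).prod * x a * ((p.map x).prod)⁻¹ * (x a)⁻¹ * cw x [a] n,
        mul_mem (Npos_swap hyp p a) (Npos_conj _ hn), ?_⟩
      have e' : g' = ((p.map x).prod)⁻¹ * (n * (p'.map x).prod) := by rw [← e]; group
      rw [e']; simp [cw, mul_assoc]
    · refine ⟨p, p', cw x p s * n, mul_mem (Subgroup.subset_closure ⟨p, s, hc, rfl⟩) hn, ?_⟩
      have e' : g' = ((p.map x).prod)⁻¹ * (n * (p'.map x).prod) := by rw [← e]; group
      rw [e']; simp [cw, mul_assoc]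
  | inv_mul_cancel s hs g' _ ih =>
    obtain ⟨p, p', n, hn, e⟩ := ih
    rcases hg hs with ⟨a, rfl⟩ | hc
    · refine ⟨p ++ [a], p', n, hn, ?_⟩
      simp [e]
    · refine ⟨p, p', (cw x p s)⁻¹ * n,
        mul_mem (inv_mem (Subgroup.subset_closure ⟨p, s, hc, rfl⟩)) hn, ?_⟩
      have e' : g' = ((p.map x).prod)⁻¹ * (n * (p'.map x).prod) := by rw [← e]; group
      rw [e']; simp [cw, mul_assoc]

lemma normalClosure_comm (hyp : Hyp x C) (H : HH x C 4) (gens : Set Γ) (hg : gens ⊆ Set.range x ∪ C)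
    (htop : Subgroup.closure gens = ⊤) {a b : Γ} (ha : a ∈ Subgroup.normalClosure C)
    (hb : b ∈ Subgroup.normalClosure C) : Commute a b := by
  have key : ∀ c ∈ C, ∀ c' ∈ C, ∀ g : Γ, Commute c (g * c' * g⁻¹) := by
    intro c hc c' hc' g
    obtain ⟨p, p', n, hn, e⟩ := normal_form hyp gens hg htop g
    have h1 : cw x p c ∈ Npos x C := Subgroup.subset_closure ⟨p, c, hc, rfl⟩
    have h2 : n * cw x p' c' * n⁻¹ ∈ Npos x C :=
      mul_mem (mul_mem hn (Subgroup.subset_closure ⟨p', c', hc', rfl⟩)) (inv_mem hn)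
    have h3 := conj_commute (g := ((p.map x).prod)⁻¹) (Npos_comm hyp H h1 h2)
    have e' : g = ((p.map x).prod)⁻¹ * (n * (p'.map x).prod) := by rw [← e]; group
    rw [e']
    convert h3 using 1 <;> simp [cw, mul_assoc]
  refine commute_closure ha ?_
  intro s hs
  refine (commute_closure hb ?_).symm
  intro t ht
  rw [Group.mem_conjugatesOfSet_iff] at hs ht
  obtain ⟨c, hc, hs⟩ := hs
  obtain ⟨c', hc', ht⟩ := ht
  rw [isConj_iff] at hs ht
  obtain ⟨g, rfl⟩ := hs
  obtain ⟨g', rfl⟩ := ht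
  have := conj_commute (g := g') (key c' hc' c hc (g'⁻¹ * g))
  convert this using 1
  simp [mul_assoc]

lemma commutator_le_of_gens {Γ : Type} [Group Γ] (N : Subgroup Γ) [N.Normal] (gens : Set Γ)
    (htop : Subgroup.closure gens = ⊤) (h : ∀ s ∈ gens, ∀ t ∈ gens, ⁅s, t⁆ ∈ N) :
    commutator Γ ≤ N := by
  have hcomm : ∀ s ∈ gens, ∀ t ∈ gens, Commute (QuotientGroup.mk' N s) (QuotientGroup.mk' N t) := by
    intro s hs t ht
    rw [← commutatorElement_eq_one_iff_commute, ← map_commutatorElement, QuotientGroup.mk'_apply,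
      QuotientGroup.eq_one_iff]
    exact h s hs t ht
  have hall : ∀ s t : Γ, Commute (QuotientGroup.mk' N s) (QuotientGroup.mk' N t) := by
    have hm : ∀ s : Γ, QuotientGroup.mk' N s ∈ Subgroup.closure (QuotientGroup.mk' N '' gens) := by
      intro s
      rw [← MonoidHom.map_closure, htop]
      exact ⟨s, trivial, rfl⟩
    intro s t
    refine commute_closure (hm s) ?_
    rintro _ ⟨s, hs, rfl⟩
    refine (commute_closure (hm t) ?_).symm
    rintro _ ⟨t, ht, rfl⟩
    exact hcomm _ ht _ hs
  rw [commutator_def, Subgroup.commutator_le]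
  intro s _ t _
  rw [← QuotientGroup.eq_one_iff, ← QuotientGroup.mk'_apply, map_commutatorElement,
    commutatorElement_eq_one_iff_commute]
  exact hall s t

lemma commutator_comm (hyp : Hyp x C) (H : HH x C 4) (gens : Set Γ) (hg : gens ⊆ Set.range x ∪ C)
    (htop : Subgroup.closure gens = ⊤) {a b : Γ} (ha : a ∈ commutator Γ)
    (hb : b ∈ commutator Γ) : Commute a b := by
  have hle : commutator Γ ≤ Subgroup.normalClosure C := by
    refine commutator_le_of_gens _ gens htop ?_
    intro s hs t ht
    have hn : (Subgroup.normalClosure C).Normal := inferInstance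
    have hCN : ∀ c ∈ C, c ∈ Subgroup.normalClosure C := fun c hc => Subgroup.subset_normalClosure hc
    rw [commutatorElement_def]
    rcases hg hs with ⟨a, rfl⟩ | hc
    · rcases hg ht with ⟨b, rfl⟩ | hc
      · exact hCN _ (hyp.hC a b)
      · exact mul_mem (hn.conj_mem _ (hCN _ hc) _) (inv_mem (hCN _ hc))
    · rw [mul_assoc, mul_assoc]
      refine mul_mem (hCN _ hc) ?_
      rw [← mul_assoc]
      exact hn.conj_mem _ (inv_mem (hCN _ hc)) _
  exact normalClosure_comm hyp H gens hg htop (hle ha) (hle hb)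
end

section MaxN
variable {Γ : Type} [Group Γ]

theorem maxn [Group.FG Γ] (hcomm : ∀ a ∈ commutator Γ, ∀ b ∈ commutator Γ, Commute a b)
    (L : Subgroup Γ) [hLn : L.Normal] : L.IsFinitelyNormallyGenerated := by
  classical
  let : CommGroup (commutator Γ) :=
    { (inferInstance : Group (commutator Γ)) with
      mul_comm := fun a b => Subtype.ext (hcomm a a.2 b b.2) }
  let ρ0 : Γ →* Module.End ℤ (Additive (commutator Γ)) :=
    { toFun := fun g => (MonoidHom.toAdditive (MulAut.conjNormal (H := commutator Γ) g).toMonoidHom).toIntLinearMap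
      map_one' := by ext a; simp
      map_mul' := fun g h => by ext a; simp }
  have hρ0 : ∀ g (n : commutator Γ), ((ρ0 g (Additive.ofMul n)).toMul : Γ) = g * n * g⁻¹ := by
    intro g n; simp [ρ0]
  let ρ : Representation ℤ (Abelianization Γ) (Additive (commutator Γ)) :=
    QuotientGroup.lift (commutator Γ) ρ0 (by
      intro g hg
      refine LinearMap.ext fun n => ?_
      have h1 := hρ0 g n.toMul
      have h2 : g * (n.toMul : Γ) * g⁻¹ = n.toMul := by
        rw [(hcomm g hg _ n.toMul.2).eq]; group
      apply Additive.toMul.injective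
      apply Subtype.ext
      rw [h2] at h1
      exact h1)
  have hρ : ∀ g (n : commutator Γ), ((ρ (Abelianization.of g) (Additive.ofMul n)).toMul : Γ) = g * n * g⁻¹ :=
    hρ0
  let A := MonoidAlgebra ℤ (Abelianization Γ)
  have : Group.FG (Abelianization Γ) := QuotientGroup.fg (commutator Γ)
  have : Algebra.FiniteType ℤ A := inferInstance
  have : IsNoetherianRing A := Algebra.FiniteType.isNoetherianRing ℤ A
  have hsm : ∀ (g : Γ) (n : commutator Γ),
      MonoidAlgebra.of ℤ (Abelianization Γ) (Abelianization.of g) • (ρ.asModuleEquiv.symm (Additive.ofMul n))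
       = ρ.asModuleEquiv.symm (Additive.ofMul (MulAut.conjNormal g n)) := by
    intro g n
    rw [← Representation.asModuleEquiv_symm_map_rho]
    rfl
  let em : commutator Γ → ρ.asModule := fun n => ρ.asModuleEquiv.symm (Additive.ofMul n)
  have em_surj : ∀ v : ρ.asModule, ∃ n, em n = v := fun v => ⟨(ρ.asModuleEquiv v).toMul, by simp [em]⟩
  have em_inj : Function.Injective em := fun a b h => by simpa [em] using h
  have em_mul : ∀ a b, em (a * b) = em a + em b := fun a b => by simp [em]
  have em_one : em 1 = 0 := by simp [em]
  have em_inv : ∀ a, em a⁻¹ = - em a := fun a => by simp [em]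
  -- submodule of a normal subgroup
  let PL : ∀ (L : Subgroup Γ) [L.Normal], Submodule A ρ.asModule := fun L hL =>
    { carrier := {v | ∃ n : commutator Γ, (n : Γ) ∈ L ∧ em n = v}
      add_mem' := by
        rintro _ _ ⟨a, ha, rfl⟩ ⟨b, hb, rfl⟩
        exact ⟨a * b, mul_mem ha hb, em_mul a b⟩
      zero_mem' := ⟨1, one_mem _, em_one⟩
      smul_mem' := by
        intro r
        induction r using MonoidAlgebra.induction_on with
        | of q =>
          rintro _ ⟨n, hn, rfl⟩
          obtain ⟨g, rfl⟩ := QuotientGroup.mk_surjective q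
          refine ⟨MulAut.conjNormal g n, ?_, (hsm g n).symm⟩
          rw [MulAut.conjNormal_apply]
          exact hL.conj_mem _ hn g
        | add f g hf hg =>
          rintro v hv
          obtain ⟨a, ha, ea⟩ := hf hv
          obtain ⟨b, hb, eb⟩ := hg hv
          exact ⟨a * b, mul_mem ha hb, by rw [em_mul, ea, eb, add_smul]⟩
        | smul r f hf =>
          rintro v hv
          obtain ⟨a, ha, ea⟩ := hf hv
          refine ⟨a ^ r, by simpa using zpow_mem ha r, ?_⟩
          rw [smul_assoc, ← ea]
          simp [em] }
  let toSub : Submodule A ρ.asModule → Subgroup Γ := fun P =>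
    { carrier := {g | ∃ n : commutator Γ, (n : Γ) = g ∧ em n ∈ P}
      mul_mem' := by
        rintro _ _ ⟨a, rfl, ha⟩ ⟨b, rfl, hb⟩
        exact ⟨a * b, rfl, by rw [em_mul]; exact add_mem ha hb⟩
      one_mem' := ⟨1, rfl, by rw [em_one]; exact zero_mem _⟩
      inv_mem' := by
        rintro _ ⟨a, rfl, ha⟩
        exact ⟨a⁻¹, rfl, by rw [em_inv]; exact neg_mem ha⟩ }
  have toSub_normal : ∀ P, (toSub P).Normal := by
    intro P
    constructor
    rintro _ ⟨n, rfl, hn⟩ g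
    refine ⟨MulAut.conjNormal g n, by simp, ?_⟩
    have := P.smul_mem (MonoidAlgebra.of ℤ (Abelianization Γ) (Abelianization.of g)) hn
    rwa [hsm g n] at this
  -- finite generation
  obtain ⟨S, hS⟩ := Group.FG.out (G := Γ)
  have hfin : Module.Finite A ρ.asModule := by
    let T : Set ρ.asModule := (fun p : Γ × Γ => em ⟨⁅p.1, p.2⁆, Subgroup.commutator_mem_commutator (Subgroup.mem_top _) (Subgroup.mem_top _)⟩) ''
      ((S : Set Γ) ×ˢ (S : Set Γ))
    have hT : T.Finite := ((Finset.finite_toSet S).prod (Finset.finite_toSet S)).image _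
    refine ⟨⟨hT.toFinset, ?_⟩⟩
    rw [Set.Finite.coe_toFinset, eq_top_iff]
    intro v _
    obtain ⟨n, rfl⟩ := em_surj v
    have := toSub_normal (Submodule.span A T)
    have := commutator_le_of_gens (toSub (Submodule.span A T)) S hS (fun s hs t ht =>
      ⟨⟨⁅s, t⁆, Subgroup.commutator_mem_commutator (Subgroup.mem_top _) (Subgroup.mem_top _)⟩, rfl, 
        Submodule.subset_span ⟨(s, t), ⟨hs, ht⟩, rfl⟩⟩) n.2
    obtain ⟨n', h1, h2⟩ := this
    have : n' = n := Subtype.ext h1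
    rwa [this] at h2
  have : IsNoetherian A ρ.asModule := isNoetherian_of_isNoetherianRing_of_finite A _
  obtain ⟨T1, hT1⟩ := IsNoetherian.noetherian (PL L)
  have hT1' : ∀ v ∈ T1, ∃ n : commutator Γ, (n : Γ) ∈ L ∧ em n = v := by
    intro v hv
    have : v ∈ PL L := by rw [← hT1]; exact Submodule.subset_span hv
    exact this
  choose! f1 hf1 hf1' using hT1'
  -- the image in the abelianization
  have hfgQ : (L.map (Abelianization.of (G := Γ))).FG := by
    rw [Subgroup.fg_iff_add_fg]
    have : Module.Finite ℤ (Additive (Abelianization Γ)) := by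
      rw [Module.Finite.iff_addGroup_fg]; infer_instance
    have : IsNoetherian ℤ (Additive (Abelianization Γ)) := isNoetherian_of_isNoetherianRing_of_finite _ _
    have := IsNoetherian.noetherian (AddSubgroup.toIntSubmodule (Subgroup.toAddSubgroup (L.map (Abelianization.of (G := Γ)))))
    rw [Submodule.fg_iff_addSubgroup_fg] at this
    simpa using this
  obtain ⟨T2, hT2⟩ := hfgQ
  have hT2' : ∀ q ∈ T2, ∃ l ∈ L, Abelianization.of l = q := by
    intro q hq
    have : q ∈ L.map (Abelianization.of (G := Γ)) := by rw [← hT2]; exact Subgroup.subset_closure hq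
    exact this
  choose! f2 hf2 hf2' using hT2'
  let T : Set Γ := (fun v => (f1 v : Γ)) '' T1 ∪ f2 '' T2
  refine ⟨T, ((Finset.finite_toSet _).image _).union ((Finset.finite_toSet _).image _), ?_⟩
  apply le_antisymm
  · apply Subgroup.normalClosure_le_normal
    rintro _ (⟨v, hv, rfl⟩ | ⟨q, hq, rfl⟩)
    · exact hf1 v hv
    · exact hf2 q hq
  · intro l hl
    have hq : Abelianization.of l ∈ (Subgroup.normalClosure T).map (Abelianization.of (G := Γ)) := by
      have : Abelianization.of l ∈ L.map (Abelianization.of (G := Γ)) := ⟨l, hl, rfl⟩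
      rw [← hT2] at this
      refine (Subgroup.closure_le _).2 ?_ this
      intro q hq
      exact ⟨f2 q, Subgroup.subset_normalClosure (Or.inr ⟨q, hq, rfl⟩), hf2' q hq⟩
    obtain ⟨l', hl', e⟩ := hq
    have hTL : Subgroup.normalClosure T ≤ L := by
      apply Subgroup.normalClosure_le_normal
      rintro _ (⟨v, hv, rfl⟩ | ⟨q, hq, rfl⟩)
      · exact hf1 v hv
      · exact hf2 q hq
    have hn : l'⁻¹ * l ∈ commutator Γ := QuotientGroup.eq.1 e
    have hin : em ⟨l'⁻¹ * l, hn⟩ ∈ PL (Subgroup.normalClosure T) := by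
      have h1 : PL L ≤ PL (Subgroup.normalClosure T) := by
        rw [← hT1, Submodule.span_le]
        intro v hv
        exact ⟨f1 v, Subgroup.subset_normalClosure (Or.inl ⟨v, hv, rfl⟩), hf1' v hv⟩
      exact h1 ⟨⟨l'⁻¹ * l, hn⟩, mul_mem (inv_mem (hTL hl')) hl, rfl⟩
    obtain ⟨n, hn1, hn2⟩ := hin
    have h3 := em_inj hn2
    rw [h3] at hn1
    have := mul_mem hl' hn1
    simpa using this
end MaxN
end FPC

namespace FPC
open scoped commutatorElement

lemma map_cw {Γ Γ' E : Type} [Group Γ] [Group Γ'] (f : Γ →* Γ') (x : Fin 7 ⊕ E → Γ) (w) (c : Γ) :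
    f (cw x w c) = cw (fun a => f (x a)) w (f c) := by
  simp [cw, map_list_prod, Function.comp_def]

lemma cw_mem {Γ E : Type} [Group Γ] (M : Subgroup Γ) [hM : M.Normal] (x : Fin 7 ⊕ E → Γ) (w) {c : Γ}
    (hc : c ∈ M) : cw x w c ∈ M := hM.conj_mem _ hc _

theorem criterion_aux {K E ι F : Type} [Group K] [Group F] [hFP : Group.IsFinitelyPresented F] [Finite E] [Finite ι] (M : Subgroup K) [hMn : M.Normal]
    (hM : ∀ a ∈ M, ∀ b ∈ M, Commute a b) (x : Fin 7 ⊕ E → K) (m : ι → K) (hm : ∀ i, m i ∈ M)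
    (h0 : x (Sum.inl 0) = 1)
    (htop : Subgroup.closure (Set.range x ∪ Set.range m) = ⊤)
    (f : F →* K) (X : Fin 7 ⊕ E → F) (Y : ι → F) (hfX : ∀ a, f (X a) = x a) (hfY : ∀ i, f (Y i) = m i)
    (hFtop : Subgroup.closure (Set.range X ∪ Set.range Y) = ⊤)
    (hcomm : ∀ a b, x a * x b * (x a)⁻¹ * (x b)⁻¹ ∈ M)
    (hL : ∀ c ∈ M, ∀ i : Fin 7, ∀ S : Finset (Fin 7), S.card = 4 →
      x (Sum.inl i) * c * (x (Sum.inl i))⁻¹ ∈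
        Subgroup.closure {y | ∃ j ∈ S, y = x (Sum.inl j) * c * (x (Sum.inl j))⁻¹})
    (hE : ∀ c ∈ M, ∀ e : E, ∀ S : Finset (Fin 7), S.card = 4 →
      x (Sum.inr e) * c * (x (Sum.inr e))⁻¹ ∈
        Subgroup.closure {y | ∃ j ∈ S, ∃ k ∈ S,
          y = (x (Sum.inl j) * x (Sum.inl k)) * c * (x (Sum.inl j) * x (Sum.inl k))⁻¹}) :
    Group.IsFinitelyPresented K := by
  classical
  let Ct : Set F := Set.range (fun p : (Fin 7 ⊕ E) × (Fin 7 ⊕ E) => X p.1 * X p.2 * (X p.1)⁻¹ * (X p.2)⁻¹) ∪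
    Set.range Y
  have hCtfin : Ct.Finite := (Set.finite_range _).union (Set.finite_range _)
  have hfC : ∀ c ∈ Ct, f c ∈ M := by
    rintro _ (⟨⟨a, b⟩, rfl⟩ | ⟨i, rfl⟩)
    · simpa [hfX] using hcomm a b
    · simpa [hfY] using hm i
  have hyL : ∀ c ∈ Ct, ∀ i : Fin 7, ∀ S : Finset (Fin 7), S.card = 4 → ∃ y : F,
      y ∈ Subgroup.closure {y | ∃ j ∈ S, y = X (Sum.inl j) * c * (X (Sum.inl j))⁻¹} ∧
      f y = f (X (Sum.inl i) * c * (X (Sum.inl i))⁻¹) := by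
    intro c hc i S hS
    have h1 := hL _ (hfC c hc) i S hS
    have h2 : {y | ∃ j ∈ S, y = x (Sum.inl j) * f c * (x (Sum.inl j))⁻¹} ⊆
        f '' {y | ∃ j ∈ S, y = X (Sum.inl j) * c * (X (Sum.inl j))⁻¹} := by
      rintro _ ⟨j, hj, rfl⟩
      exact ⟨_, ⟨j, hj, rfl⟩, by simp [hfX]⟩
    have h3 := Subgroup.closure_mono h2 h1
    rw [← MonoidHom.map_closure] at h3
    obtain ⟨y, hy, e⟩ := h3
    exact ⟨y, hy, by simp [hfX, e]⟩
  have hyE : ∀ c ∈ Ct, ∀ e : E, ∀ S : Finset (Fin 7), S.card = 4 → ∃ y : F,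
      y ∈ Subgroup.closure {y | ∃ j ∈ S, ∃ k ∈ S,
          y = (X (Sum.inl j) * X (Sum.inl k)) * c * (X (Sum.inl j) * X (Sum.inl k))⁻¹} ∧
      f y = f (X (Sum.inr e) * c * (X (Sum.inr e))⁻¹) := by
    intro c hc i S hS
    have h1 := hE _ (hfC c hc) i S hS
    have h2 : {y | ∃ j ∈ S, ∃ k ∈ S,
          y = (x (Sum.inl j) * x (Sum.inl k)) * f c * (x (Sum.inl j) * x (Sum.inl k))⁻¹} ⊆
        f '' {y | ∃ j ∈ S, ∃ k ∈ S,
          y = (X (Sum.inl j) * X (Sum.inl k)) * c * (X (Sum.inl j) * X (Sum.inl k))⁻¹} := by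
      rintro _ ⟨j, hj, k, hk, rfl⟩
      exact ⟨_, ⟨j, hj, k, hk, rfl⟩, by simp [hfX]⟩
    have h3 := Subgroup.closure_mono h2 h1
    rw [← MonoidHom.map_closure] at h3
    obtain ⟨y, hy, e⟩ := h3
    exact ⟨y, hy, by simp [hfX, e]⟩
  choose! yL hyL1 hyL2 using hyL
  choose! yE hyE1 hyE2 using hyE
  let Wd : Set (List (Fin 7 ⊕ E)) := {l | l.length ≤ 4}
  have hWd : Wd.Finite := List.finite_length_le _ 4
  let R1 : Set F := (fun q : (F × F) × (List (Fin 7 ⊕ E) × List (Fin 7 ⊕ E)) =>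
    ⁅cw X q.2.1 q.1.1, cw X q.2.2 q.1.2⁆) '' ((Ct ×ˢ Ct) ×ˢ (Wd ×ˢ Wd))
  let R2 : Set F := (fun q : F × (Fin 7 × Finset (Fin 7)) =>
    (X (Sum.inl q.2.1) * q.1 * (X (Sum.inl q.2.1))⁻¹) * (yL q.1 q.2.1 q.2.2)⁻¹) ''
      (Ct ×ˢ {p | p.2.card = 4})
  let R3 : Set F := (fun q : F × (E × Finset (Fin 7)) =>
    (X (Sum.inr q.2.1) * q.1 * (X (Sum.inr q.2.1))⁻¹) * (yE q.1 q.2.1 q.2.2)⁻¹) ''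
      (Ct ×ˢ {p | p.2.card = 4})
  let R0 : Set F := {X (Sum.inl 0)} ∪ R1 ∪ R2 ∪ R3
  have hR0 : R0.Finite := by
    refine (((Set.finite_singleton _).union ?_).union ?_).union ?_
    · exact ((hCtfin.prod hCtfin).prod (hWd.prod hWd)).image _
    · exact (hCtfin.prod (Set.toFinite _)).image _
    · exact (hCtfin.prod (Set.toFinite _)).image _
  have hker : ∀ r ∈ R0, f r = 1 := by
    rintro _ (((rfl | ⟨⟨⟨c, c'⟩, v, w⟩, ⟨⟨hc, hc'⟩, -⟩, rfl⟩) | ⟨⟨c, i, S⟩, ⟨hc, hS⟩, rfl⟩) |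
      ⟨⟨c, i, S⟩, ⟨hc, hS⟩, rfl⟩)
    · simp [hfX, h0]
    · simp only [map_commutatorElement, commutatorElement_eq_one_iff_commute, map_cw]
      exact hM _ (cw_mem M _ _ (hfC _ hc)) _ (cw_mem M _ _ (hfC _ hc'))
    · simp only [map_mul, map_inv] at *
      rw [hyL2 c hc i S hS]; simp
    · simp only [map_mul, map_inv] at *
      rw [hyE2 c hc i S hS]; simp
  obtain ⟨Γ, _, π, hπs, hkerπ⟩ : ∃ (Γ : Type) (_ : Group Γ) (π : F →* Γ), Function.Surjective π ∧
      π.ker = Subgroup.normalClosure R0 :=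
    ⟨F ⧸ Subgroup.normalClosure R0, inferInstance, QuotientGroup.mk' _, QuotientGroup.mk'_surjective _,
      QuotientGroup.ker_mk' _⟩
  have hπ1 : ∀ r ∈ R0, π r = 1 := fun r hr => by
    have : r ∈ π.ker := by rw [hkerπ]; exact Subgroup.subset_normalClosure hr
    exact this
  have hkle : π.ker ≤ f.ker := by
    rw [hkerπ]; exact Subgroup.normalClosure_le_normal hker
  let g : Γ →* K := π.liftOfSurjective hπs ⟨f, hkle⟩
  have hgπ : ∀ y, g (π y) = f y := fun y => π.liftOfRightInverse_comp_apply _ _ ⟨f, hkle⟩ y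
  have hfs : Function.Surjective f := by
    rw [← MonoidHom.range_eq_top, eq_top_iff, ← htop, Subgroup.closure_le]
    rintro _ (⟨a, rfl⟩ | ⟨i, rfl⟩)
    · exact ⟨X a, hfX a⟩
    · exact ⟨Y i, hfY i⟩
  have hgs : Function.Surjective g := fun k => by
    obtain ⟨y, rfl⟩ := hfs k
    exact ⟨π y, hgπ y⟩
  have : Group.IsFinitelyPresented Γ := Group.IsFinitelyPresented.of_surjective π hπs ⟨R0, hR0, hkerπ.symm⟩
  have hFG : Group.FG Γ := by
    obtain ⟨n, φ, hφ, -⟩ := this.out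
    exact Group.fg_of_surjective hφ
  let x' : Fin 7 ⊕ E → Γ := fun a => π (X a)
  let C' : Set Γ := π '' Ct
  have hyp : Hyp x' C' := by
    refine ⟨hπ1 _ (by simp [R0]), ?_, ?_, ?_⟩
    · intro a b
      exact ⟨_, Or.inl ⟨(a, b), rfl⟩, by simp [x']⟩
    · rintro _ ⟨c, hc, rfl⟩ i S hS
      have h1 := hπ1 _ (Or.inl (Or.inr ⟨(c, i, S), ⟨hc, hS⟩, rfl⟩))
      simp only [map_mul, map_inv, mul_inv_eq_one] at h1
      rw [show x' (Sum.inl i) = π (X (Sum.inl i)) from rfl, h1]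
      have h2 := Subgroup.mem_map_of_mem π (hyL1 c hc i S hS)
      rw [MonoidHom.map_closure] at h2
      refine Subgroup.closure_mono ?_ h2
      rintro _ ⟨_, ⟨j, hj, rfl⟩, rfl⟩
      exact ⟨j, hj, by simp [x']⟩
    · rintro _ ⟨c, hc, rfl⟩ i S hS
      have h1 := hπ1 _ (Or.inr ⟨(c, i, S), ⟨hc, hS⟩, rfl⟩)
      simp only [map_mul, map_inv, mul_inv_eq_one] at h1
      rw [show x' (Sum.inr i) = π (X (Sum.inr i)) from rfl, h1]
      have h2 := Subgroup.mem_map_of_mem π (hyE1 c hc i S hS)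
      rw [MonoidHom.map_closure] at h2
      refine Subgroup.closure_mono ?_ h2
      rintro _ ⟨_, ⟨j, hj, k, hk, rfl⟩, rfl⟩
      exact ⟨j, hj, k, hk, by simp [x']⟩
  have hHH : HH x' C' 4 := by
    rintro v w hv hw _ ⟨c, hc, rfl⟩ _ ⟨c', hc', rfl⟩
    have h1 := hπ1 _ (Or.inl (Or.inl (Or.inr ⟨((c, c'), (v, w)), ⟨⟨hc, hc'⟩,
      ⟨(length_le_Wt v).trans hv, (length_le_Wt w).trans hw⟩⟩, rfl⟩)))
    simpa only [map_commutatorElement, commutatorElement_eq_one_iff_commute, map_cw] using h1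
  let gens : Set Γ := π '' (Set.range X ∪ Set.range Y)
  have hgens : gens ⊆ Set.range x' ∪ C' := by
    rintro _ ⟨_, (⟨a, rfl⟩ | ⟨i, rfl⟩), rfl⟩
    · exact Or.inl ⟨a, rfl⟩
    · exact Or.inr ⟨_, Or.inr ⟨i, rfl⟩, rfl⟩
  have hgtop : Subgroup.closure gens = ⊤ := by
    rw [← MonoidHom.map_closure, hFtop, ← MonoidHom.range_eq_map,
      MonoidHom.range_eq_top]
    exact hπs
  have hcc := fun a ha b hb => commutator_comm hyp hHH gens hgens hgtop (a := a) (b := b) ha hb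
  exact Group.IsFinitelyPresented.of_surjective g hgs (maxn hcc g.ker)
theorem criterion {K E ι : Type} [Group K] [Finite E] [Finite ι] (M : Subgroup K) [hMn : M.Normal]
    (hM : ∀ a ∈ M, ∀ b ∈ M, Commute a b) (x : Fin 7 ⊕ E → K) (m : ι → K) (hm : ∀ i, m i ∈ M)
    (h0 : x (Sum.inl 0) = 1)
    (htop : Subgroup.closure (Set.range x ∪ Set.range m) = ⊤)
    (hcomm : ∀ a b, x a * x b * (x a)⁻¹ * (x b)⁻¹ ∈ M)
    (hL : ∀ c ∈ M, ∀ i : Fin 7, ∀ S : Finset (Fin 7), S.card = 4 →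
      x (Sum.inl i) * c * (x (Sum.inl i))⁻¹ ∈
        Subgroup.closure {y | ∃ j ∈ S, y = x (Sum.inl j) * c * (x (Sum.inl j))⁻¹})
    (hE : ∀ c ∈ M, ∀ e : E, ∀ S : Finset (Fin 7), S.card = 4 →
      x (Sum.inr e) * c * (x (Sum.inr e))⁻¹ ∈
        Subgroup.closure {y | ∃ j ∈ S, ∃ k ∈ S,
          y = (x (Sum.inl j) * x (Sum.inl k)) * c * (x (Sum.inl j) * x (Sum.inl k))⁻¹}) :
    Group.IsFinitelyPresented K := by
  let X : Fin 7 ⊕ E → FreeGroup ((Fin 7 ⊕ E) ⊕ ι) := fun a => FreeGroup.of (Sum.inl a)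
  let Y : ι → FreeGroup ((Fin 7 ⊕ E) ⊕ ι) := fun a => FreeGroup.of (Sum.inr a)
  refine criterion_aux M hM x m hm h0 htop (FreeGroup.lift (Sum.elim x m)) X Y (fun a => by simp [X])
    (fun a => by simp [Y]) ?_ hcomm hL hE
  rw [eq_top_iff, ← FreeGroup.closure_range_of]
  apply Subgroup.closure_mono
  rintro _ ⟨(a | i), rfl⟩
  · exact Or.inl ⟨a, rfl⟩
  · exact Or.inr ⟨i, rfl⟩
end FPC

namespace FPB
open MonoidAlgebra

variable {H : Type} [Group H]

lemma equiv_lin {P W : Type} [AddCommGroup P] [Module (MonoidAlgebra ℤ H) P] [AddCommGroup W]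
    (σ : H →* AddMonoid.End W) (b : P →+ W)
    (hb : ∀ g c, b (MonoidAlgebra.of ℤ H g • c) = σ g (b c)) (a : MonoidAlgebra ℤ H) (c : P) :
    b (a • c) = (MonoidAlgebra.lift ℤ (AddMonoid.End W) H σ a) (b c) := by
  induction a using MonoidAlgebra.induction_on with
  | of g => simp only [hb, MonoidAlgebra.lift_of]
  | add x y hx hy => simp only [add_smul, map_add, hx, hy]; rfl
  | smul r x hx => 
    rw [smul_assoc, map_zsmul, hx, map_zsmul]; rfl

lemma lift_equiv {P V W : Type} [AddCommGroup P] [Module (MonoidAlgebra ℤ H) P]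
    [Module.Projective (MonoidAlgebra ℤ H) P] [AddCommGroup V] [AddCommGroup W]
    (ρ : H →* AddMonoid.End V) (σ : H →* AddMonoid.End W) (π : V →+ W)
    (hπ : Function.Surjective π) (hπe : ∀ g v, π (ρ g v) = σ g (π v)) (b : P →+ W)
    (hb : ∀ g c, b (MonoidAlgebra.of ℤ H g • c) = σ g (b c)) :
    ∃ β : P →+ V, (∀ g c, β (MonoidAlgebra.of ℤ H g • c) = ρ g (β c)) ∧ ∀ c, π (β c) = b c := by
  let iV : Module (MonoidAlgebra ℤ H) V :=
    Module.compHom V (MonoidAlgebra.lift ℤ (AddMonoid.End V) H ρ).toRingHom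
  let iW : Module (MonoidAlgebra ℤ H) W :=
    Module.compHom W (MonoidAlgebra.lift ℤ (AddMonoid.End W) H σ).toRingHom
  have hVs : ∀ (a : MonoidAlgebra ℤ H) (v : V), a • v = (MonoidAlgebra.lift ℤ (AddMonoid.End V) H ρ a) v := fun _ _ => rfl
  have hWs : ∀ (a : MonoidAlgebra ℤ H) (v : W), a • v = (MonoidAlgebra.lift ℤ (AddMonoid.End W) H σ a) v := fun _ _ => rfl
  let bl : P →ₗ[MonoidAlgebra ℤ H] W :=
    { toFun := b, map_add' := map_add b, map_smul' := fun a c => equiv_lin σ b hb a c }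
  let πl : V →ₗ[MonoidAlgebra ℤ H] W :=
    { toFun := π, map_add' := map_add π
      map_smul' := fun a c => equiv_lin σ π (fun g c => by
        rw [hVs, MonoidAlgebra.lift_of, hπe]) a c }
  obtain ⟨h, hh⟩ := Module.projective_lifting_property πl bl hπ
  refine ⟨h.toAddMonoidHom, fun g c => ?_, fun c => ?_⟩
  · change h _ = _
    rw [map_smul, hVs, MonoidAlgebra.lift_of]; rfl
  · exact LinearMap.congr_fun hh c

variable {E : Type} [CommRing E]

/-- multiplication rep -/
def mrep (ψ : H →* E) : H →* AddMonoid.End E where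
  toFun g := AddMonoidHom.mulLeft (ψ g)
  map_one' := by
    ext x
    change ψ 1 * x = x
    simp
  map_mul' a b := by
    ext x
    change ψ (a * b) * x = ψ a * (ψ b * x)
    rw [map_mul, mul_assoc]

def vrep (ψ χ : H →* E) (u : H → E) (hu : ∀ g h, u (g * h) = u g + χ g * u h) :
    H →* AddMonoid.End (E × E) where
  toFun g := 
    { toFun := fun v => (ψ g * χ g * v.1 + ψ g * u g * v.2, ψ g * v.2)
      map_zero' := by simp
      map_add' := fun x y => by ext <;> simp <;> ring }
  map_one' := by
    have h1 : u 1 = 0 := by have := hu 1 1; simp at this; exact this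
    refine AddMonoidHom.ext fun x => Prod.ext ?_ ?_
    · change ψ 1 * χ 1 * x.1 + ψ 1 * u 1 * x.2 = x.1
      simp [h1]
    · change ψ 1 * x.2 = x.2
      simp
  map_mul' a b := by
    refine AddMonoidHom.ext fun x => Prod.ext ?_ ?_
    · change ψ (a * b) * χ (a * b) * x.1 + ψ (a * b) * u (a * b) * x.2 =
        ψ a * χ a * (ψ b * χ b * x.1 + ψ b * u b * x.2) + ψ a * u a * (ψ b * x.2)
      rw [map_mul, map_mul, hu]; ring
    · change ψ (a * b) * x.2 = ψ a * (ψ b * x.2)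
      rw [map_mul, mul_assoc]

lemma exists_beta {P : Type} [AddCommGroup P] [Module (MonoidAlgebra ℤ H) P]
    [Module.Projective (MonoidAlgebra ℤ H) P] (ψ χ : H →* E) (u : H → E)
    (hu : ∀ g h, u (g * h) = u g + χ g * u h) (b : P →+ E)
    (hb : ∀ g c, b (MonoidAlgebra.of ℤ H g • c) = ψ g * b c) :
    ∃ β : P →+ E, ∀ g c, β (MonoidAlgebra.of ℤ H g • c) = ψ g * χ g * β c + ψ g * u g * b c := by
  obtain ⟨β, h1, h2⟩ := lift_equiv (vrep ψ χ u hu) (mrep ψ) (AddMonoidHom.snd E E)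
    (fun y => ⟨(0, y), rfl⟩) (fun g v => rfl) b hb
  refine ⟨(AddMonoidHom.fst E E).comp β, fun g c => ?_⟩
  have h3 : (β c).2 = b c := h2 c
  simp only [AddMonoidHom.comp_apply, h1]
  rw [← h3]; rfl

lemma inv_span {P : Type} [AddCommGroup P] [Module (MonoidAlgebra ℤ H) P]
    [Module.Finite (MonoidAlgebra ℤ H) P] (p : ℕ) [NeZero p] [Module (ZMod p) E] (f : P →+ E)
    (hf : ∀ g c, f (MonoidAlgebra.of ℤ H g • c) = f c) : (Set.range f).Finite := by
  obtain ⟨S, hS⟩ := Module.Finite.fg_top (R := MonoidAlgebra ℤ H) (M := P)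
  have key : ∀ x : P, f x ∈ Submodule.span (ZMod p) (f '' S) := by
    intro x
    have hx : x ∈ Submodule.span (MonoidAlgebra ℤ H) (S : Set P) := by rw [hS]; trivial
    induction hx using Submodule.span_induction with
    | mem x h => exact Submodule.subset_span ⟨x, h, rfl⟩
    | zero => simp
    | add x y _ _ hx hy => rw [map_add]; exact add_mem hx hy
    | smul a x _ hx =>
      induction a using MonoidAlgebra.induction_on with
      | of g => rw [hf]; exact hx
      | add a b ha hb => rw [add_smul, map_add]; exact add_mem ha hb
      | smul r a ha => rw [smul_assoc, map_zsmul]; exact zsmul_mem ha r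
  have hfin : Module.Finite (ZMod p) (Submodule.span (ZMod p) (f '' S)) :=
    Module.Finite.span_of_finite _ (S.finite_toSet.image f)
  have : Finite (Submodule.span (ZMod p) (f '' S)) := Module.finite_of_finite (ZMod p)
  refine Set.Finite.subset (Set.toFinite (Submodule.span (ZMod p) (f '' S) : Set E)) ?_
  rintro _ ⟨x, rfl⟩
  exact key x

theorem fp3 (hFP : IsTypeFP3 H) (p : ℕ) [NeZero p] [Module (ZMod p) E]
    (χ1 χ2 χ3 : H →* E) (hχ : ∀ g, χ1 g * χ2 g * χ3 g = 1) (u1 u2 u3 : H → E)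
    (hu1 : ∀ g h, u1 (g * h) = u1 g + χ1 g * u1 h)
    (hu2 : ∀ g h, u2 (g * h) = u2 g + χ2 g * u2 h)
    (hu3 : ∀ g h, u3 (g * h) = u3 g + χ3 g * u3 h) (M : Subgroup H) 
    (hM : ∀ a ∈ M, ∀ b ∈ M, a * b = b * a)
    (hM1 : ∀ a ∈ M, χ1 a = 1) (hM2 : ∀ a ∈ M, χ2 a = 1) (hM3 : ∀ a ∈ M, χ3 a = 1) :
    ∃ F : Set E, F.Finite ∧ ∀ a ∈ M, ∀ b ∈ M, ∀ c ∈ M,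
      u1 a * (u2 b * u3 c - u2 c * u3 b) - u1 b * (u2 a * u3 c - u2 c * u3 a)
        + u1 c * (u2 a * u3 b - u2 b * u3 a) ∈ F := by
  let iZ : Module (MonoidAlgebra ℤ H) ℤ := Module.compHom ℤ (augmentationMap H)
  obtain ⟨P₃, P₂, P₁, P₀, _, _, _, _, _, _, _, _, f3, q3, f2, q2, f1, q1, f0, q0, d₃, d₂, d₁, ε,
    hε, h1, h2, h3⟩ := hFP
  have hεg : ∀ g c, ε (MonoidAlgebra.of ℤ H g • c) = ε c := by
    intro g c
    rw [map_smul]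
    change augmentationMap H _ * _ = _
    simp [augmentationMap]
  obtain ⟨β0, hβ0⟩ := exists_beta (P := P₀) 1 χ3 u3 hu3 ((Int.castAddHom E).comp ε.toAddMonoidHom)
    (by intro g c; simp [-MonoidAlgebra.of_apply, hεg])
  have e10 : ∀ c, ε (d₁ c) = 0 := fun c => by
    have : d₁ c ∈ LinearMap.ker ε := h1 ▸ LinearMap.mem_range_self d₁ c
    exact this
  have e21 : ∀ c, d₁ (d₂ c) = 0 := fun c => by
    have : d₂ c ∈ LinearMap.ker d₁ := h2 ▸ LinearMap.mem_range_self d₂ c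
    exact this
  have e32 : ∀ c, d₂ (d₃ c) = 0 := fun c => by
    have : d₃ c ∈ LinearMap.ker d₂ := h3 ▸ LinearMap.mem_range_self d₃ c
    exact this
  have hβ0' : ∀ g c, β0 (MonoidAlgebra.of ℤ H g • c) = χ3 g * β0 c + u3 g * (ε c : ℤ) := by
    intro g c; rw [hβ0]; simp
  obtain ⟨β1, hβ1⟩ := exists_beta (P := P₁) χ3 χ2 u2 hu2 (β0.comp d₁.toAddMonoidHom)
    (by intro g c
        change β0 (d₁ _) = _ * β0 (d₁ _)
        rw [map_smul, hβ0', e10]; simp)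
  have hβ1' : ∀ g c, β1 (MonoidAlgebra.of ℤ H g • c) = χ3 g * χ2 g * β1 c + χ3 g * u2 g * β0 (d₁ c) := hβ1
  obtain ⟨β2, hβ2⟩ := exists_beta (P := P₂) (χ3 * χ2) χ1 u1 hu1 (β1.comp d₂.toAddMonoidHom)
    (by intro g c
        change β1 (d₂ _) = _ * β1 (d₂ _)
        rw [map_smul, hβ1', e21]; simp)
  have hβ2' : ∀ g c, β2 (MonoidAlgebra.of ℤ H g • c) =
      χ3 g * χ2 g * χ1 g * β2 c + χ3 g * χ2 g * u1 g * β1 (d₂ c) := hβ2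
  refine ⟨_, inv_span (H := H) (P := P₃) p (β2.comp d₃.toAddMonoidHom) ?_, ?_⟩
  · intro g c
    change β2 (d₃ _) = β2 (d₃ _)
    rw [map_smul, hβ2', e32, map_zero, mul_zero, add_zero,
      show χ3 g * χ2 g * χ1 g = 1 by rw [← hχ g]; ring, one_mul]
  · intro a ha b hb c hc
    obtain ⟨p0, hp0⟩ := hε 1
    have ex1 : ∀ g, ∃ x, d₁ x = MonoidAlgebra.of ℤ H g • p0 - p0 := fun g => by
      have : MonoidAlgebra.of ℤ H g • p0 - p0 ∈ LinearMap.ker ε := by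
        rw [LinearMap.mem_ker, map_sub, hεg, sub_self]
      rw [← h1] at this
      exact this
    choose x hx using ex1
    have com : ∀ {P : Type} [AddCommGroup P] [Module (MonoidAlgebra ℤ H) P] (g h : H) (c : P),
        g * h = h * g → MonoidAlgebra.of ℤ H g • MonoidAlgebra.of ℤ H h • c = 
          MonoidAlgebra.of ℤ H h • MonoidAlgebra.of ℤ H g • c := by
      intro P _ _ g h c hgh
      rw [← mul_smul, ← mul_smul, ← map_mul, ← map_mul, hgh]
    have ex2 : ∀ g h, g * h = h * g → ∃ y, d₂ y =
        (MonoidAlgebra.of ℤ H g • x h - x h) - (MonoidAlgebra.of ℤ H h • x g - x g) := fun g h hgh => by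
      have : (MonoidAlgebra.of ℤ H g • x h - x h) - (MonoidAlgebra.of ℤ H h • x g - x g) ∈ LinearMap.ker d₁ := by
        rw [LinearMap.mem_ker]
        simp only [map_sub, map_smul, hx, smul_sub]
        rw [com g h p0 hgh]; abel
      rw [← h2] at this
      exact this
    obtain ⟨ybc, hbc⟩ := ex2 b c (hM b hb c hc)
    obtain ⟨yac, hac⟩ := ex2 a c (hM a ha c hc)
    obtain ⟨yab, hab⟩ := ex2 a b (hM a ha b hb)
    let w : P₂ := (MonoidAlgebra.of ℤ H a • ybc - ybc) - (MonoidAlgebra.of ℤ H b • yac - yac)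
      + (MonoidAlgebra.of ℤ H c • yab - yab)
    have hw : w ∈ LinearMap.ker d₂ := by
      rw [LinearMap.mem_ker]
      simp only [w, map_sub, map_add, map_smul, hbc, hac, hab, smul_sub]
      rw [com a b _ (hM a ha b hb), com a c _ (hM a ha c hc), com b c _ (hM b hb c hc)]; abel
    rw [← h3] at hw
    obtain ⟨z, hz⟩ := hw
    refine ⟨z, ?_⟩
    change β2 (d₃ z) = _
    rw [hz]
    have b2 : ∀ g ∈ M, ∀ c, β2 (MonoidAlgebra.of ℤ H g • c - c) = u1 g * β1 (d₂ c) := by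
      intro g hg c; rw [map_sub, hβ2', hM1 g hg, hM2 g hg, hM3 g hg]; ring
    have b1 : ∀ g ∈ M, ∀ c, β1 (MonoidAlgebra.of ℤ H g • c - c) = u2 g * β0 (d₁ c) := by
      intro g hg c; rw [map_sub, hβ1', hM2 g hg, hM3 g hg]; ring
    have b0 : ∀ g ∈ M, β0 (d₁ (x g)) = u3 g := by
      intro g hg; rw [hx, map_sub, hβ0', hM3 g hg, hp0]; simp
    simp only [w, map_add β2, map_sub β2 (_ - _), b2 a ha, b2 b hb, b2 c hc, hab, hac, hbc]
    simp only [map_sub β1 (_ - _), b1 a ha, b1 b hb, b1 c hc, b0 a ha, b0 b hb, b0 c hc]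
end FPB

namespace FPG
open MvPolynomial

lemma constCoeff_zero {n : ℕ} {k : Type} [Field k] (f g : MvPolynomial (Fin n) k) (D : ℕ)
    (hD : (f * g).IsHomogeneous D) (h0 : f * g ≠ 0) (hf : ¬ IsUnit f) : constantCoeff f = 0 := by
  by_contra hc
  have hf0 : f ≠ 0 := left_ne_zero_of_mul h0
  have hg0 : g ≠ 0 := right_ne_zero_of_mul h0
  have h1 : ((f : MvPowerSeries (Fin n) k)).order = 0 := by
    by_contra h
    rw [← ne_eq, MvPowerSeries.order_ne_zero_iff_constCoeff_eq_zero] at h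
    exact hc (by rw [← h, ← MvPowerSeries.coeff_zero_eq_constantCoeff_apply, MvPolynomial.coeff_coe]; rfl)
  have h2 : (D : ℕ∞) ≤ ((f * g : MvPolynomial (Fin n) k) : MvPowerSeries (Fin n) k).order := by
    apply MvPowerSeries.nat_le_order
    intro d hd
    rw [MvPolynomial.coeff_coe]
    exact hD.coeff_eq_zero hd.ne
  rw [MvPolynomial.coe_mul, MvPowerSeries.order_mul, h1, zero_add] at h2
  obtain ⟨d, hd⟩ := MvPolynomial.ne_zero_iff.mp hg0
  have h3 : D ≤ d.degree := by
    have := MvPowerSeries.order_le (f := (g : MvPowerSeries (Fin n) k)) (d := d) (by rwa [MvPolynomial.coeff_coe])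
    exact_mod_cast h2.trans this
  have h4 : d.degree ≤ g.totalDegree := MvPolynomial.le_totalDegree (by rwa [mem_support_iff])
  have h5 := MvPolynomial.totalDegree_mul_of_isDomain hf0 hg0
  rw [hD.totalDegree h0] at h5
  have h6 : f.totalDegree = 0 := by omega
  rw [MvPolynomial.totalDegree_eq_zero_iff_eq_C] at h6
  apply hf
  rw [h6]
  refine IsUnit.map C (isUnit_iff_ne_zero.2 ?_)
  intro h; apply hf0; rw [h6, h, map_zero]

variable {k : Type} [Field k]

/-- linear form -/
noncomputable def L (n : ℕ) (t : k) : MvPolynomial (Fin n) k := ∑ j : Fin n, C (t ^ (j : ℕ)) * X j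

noncomputable def p3 (c : k) : MvPolynomial (Fin 4) k →ₐ[k] MvPolynomial (Fin 3) k :=
  aeval ![- C c * X 0, X 0 - C c * X 1, X 1 - C c * X 2, X 2]
noncomputable def p2 (c : k) : MvPolynomial (Fin 3) k →ₐ[k] MvPolynomial (Fin 2) k :=
  aeval ![- C c * X 0, X 0 - C c * X 1, X 1]
noncomputable def p1 (c : k) : MvPolynomial (Fin 2) k →ₐ[k] MvPolynomial (Fin 1) k :=
  aeval ![- C c * X 0, X 0]

lemma algC {n : ℕ} (a : k) : algebraMap k (MvPolynomial (Fin n) k) a = C a := rfl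

lemma p3L (c s : k) : p3 c (L 4 s) = C (s - c) * L 3 s := by
  simp [p3, L, Fin.sum_univ_succ, algC, Fin.succ]; ring
lemma p2L (c s : k) : p2 c (L 3 s) = C (s - c) * L 2 s := by
  simp [p2, L, Fin.sum_univ_succ, algC, Fin.succ]; ring
lemma p1L (c s : k) : p1 c (L 2 s) = C (s - c) * L 1 s := by
  simp [p1, L, Fin.sum_univ_succ, algC, Fin.succ]; ring

lemma L_ne (n : ℕ) (t : k) : L (n+1) t ≠ 0 := by
  intro h
  have := congrArg (MvPolynomial.eval (fun j : Fin (n+1) => if j = 0 then (1:k) else 0)) h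
  simp [L] at this

lemma p_comm (a b c : k) (f : MvPolynomial (Fin 4) k) : p1 a (p2 b (p3 c f)) = p1 c (p2 a (p3 b f)) := by
  have : ((p1 a).comp ((p2 b).comp (p3 c))) = ((p1 c).comp ((p2 a).comp (p3 b))) := by
    apply MvPolynomial.algHom_ext
    intro i
    fin_cases i <;> simp [p1, p2, p3, algC] <;> ring
  exact DFunLike.congr_fun this f

lemma cc_p3 (c : k) (f : MvPolynomial (Fin 4) k) : constantCoeff (p3 c f) = constantCoeff f := by
  have : (constantCoeff (σ := Fin 3)).comp (p3 c).toRingHom = constantCoeff (R := k) := by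
    apply MvPolynomial.ringHom_ext
    · intro r; simp [p3, algC]
    · intro i
      fin_cases i <;> simp [p3]
  exact DFunLike.congr_fun this f

lemma L3_prime (s : k) : Prime (L 3 s) := by
  let e : MvPolynomial (Fin 3) k ≃ₐ[k] MvPolynomial (Fin 3) k :=
    AlgEquiv.ofAlgHom (aeval ![X 0 + C s * X 1 + C (s^2) * X 2, X 1, X 2])
      (aeval ![X 0 - C s * X 1 - C (s^2) * X 2, X 1, X 2])
      (by apply MvPolynomial.algHom_ext; intro i; fin_cases i <;> simp [algC] <;> ring)
      (by apply MvPolynomial.algHom_ext; intro i; fin_cases i <;> simp [algC] <;> ring)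
  have he : e (X 0) = L 3 s := by
    simp [e, L, Fin.sum_univ_succ, Fin.succ]; ring
  rw [← he]
  exact (MulEquiv.prime_iff e.toMulEquiv).2 (MvPolynomial.X_prime)

variable {ι : Type} [Fintype ι] [DecidableEq ι] (t : ι → k)

/-- positive part product -/
noncomputable def A (μ : ι → ℤ) : MvPolynomial (Fin 4) k := ∏ i, L 4 (t i) ^ (μ i).toNat

lemma p_prod {n : ℕ} (τ : MvPolynomial (Fin 4) k →ₐ[k] MvPolynomial (Fin (n+1)) k) (r : ι → k)
    (h : ∀ i, τ (L 4 (t i)) = C (r i) * L (n+1) (t i)) (μ : ι → ℤ) :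
    τ (A t μ) = C (∏ i, r i ^ (μ i).toNat) * ∏ i, L (n+1) (t i) ^ (μ i).toNat := by
  simp [A, map_prod, h, mul_pow, Finset.prod_mul_distrib]

lemma tA_zero {n : ℕ} (τ : MvPolynomial (Fin 4) k →ₐ[k] MvPolynomial (Fin (n+1)) k) (r : ι → k)
    (h : ∀ i, τ (L 4 (t i)) = C (r i) * L (n+1) (t i)) (μ : ι → ℤ) :
    τ (A t μ) = 0 ↔ ∃ i, 0 < μ i ∧ r i = 0 := by
  rw [p_prod t τ r h, mul_eq_zero, MvPolynomial.C_eq_zero, Finset.prod_eq_zero_iff, Finset.prod_eq_zero_iff]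
  constructor
  · rintro (⟨i, _, hi⟩ | ⟨i, _, hi⟩)
    · rw [pow_eq_zero_iff'] at hi
      exact ⟨i, by omega, hi.1⟩
    · exact absurd (pow_eq_zero_iff' .. |>.1 hi).1 (L_ne n _)
  · rintro ⟨i, hi, hr⟩
    exact Or.inl ⟨i, Finset.mem_univ i, by rw [hr, zero_pow (by omega)]⟩


lemma A_ne (ht : Function.Injective t) (μ : ι → ℤ) (h : μ ≠ 0) (hs : ∑ i, μ i = 0) : A t μ - A t (-μ) ≠ 0 := by
  have hpos : ∃ i, 0 < μ i := by
    by_contra hn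
    push Not at hn
    apply h
    have := (Finset.sum_eq_zero_iff_of_nonpos (s := Finset.univ) (f := μ) (fun i _ => hn i)).1 hs
    ext i; exact this i (Finset.mem_univ i)
  obtain ⟨i, hi⟩ := hpos
  intro h0
  rw [sub_eq_zero] at h0
  have h1 := (tA_zero t (p3 (t i)) (fun j => t j - t i) (fun j => p3L _ _) μ).2 ⟨i, hi, sub_self _⟩
  rw [h0, tA_zero t (p3 (t i)) (fun j => t j - t i) (fun j => p3L _ _)] at h1
  obtain ⟨j, hj, hji⟩ := h1
  have := ht (sub_eq_zero.1 hji)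
  subst this
  simp at hj; omega

lemma A_hom (μ : ι → ℤ) : (A t μ).IsHomogeneous (∑ i, (μ i).toNat) := by
  unfold A
  apply MvPolynomial.IsHomogeneous.prod
  intro i _
  have : (L 4 (t i)).IsHomogeneous 1 := by
    unfold L
    apply MvPolynomial.IsHomogeneous.sum
    intro j _
    exact MvPolynomial.isHomogeneous_C_mul_X _ _
  simpa using this.pow (μ i).toNat

lemma AB_hom (μ : ι → ℤ) (hs : ∑ i, μ i = 0) : (A t μ - A t (-μ)).IsHomogeneous (∑ i, (μ i).toNat) := by
  apply MvPolynomial.IsHomogeneous.sub (A_hom t μ)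
  suffices hh : ∑ i, (μ i).toNat = ∑ i, ((-μ) i).toNat by
    rw [hh]; exact A_hom t (-μ)
  apply Nat.cast_injective (R := ℤ)
  push_cast
  rw [← sub_eq_zero, ← Finset.sum_sub_distrib, ← hs]
  symm
  apply Finset.sum_congr rfl
  intro i _
  change μ i = ((μ i).toNat : ℤ) - ((-μ i).toNat : ℤ)
  omega


/-- Step 2 -/
lemma step2 (ht : Function.Injective t) (f : MvPolynomial (Fin 4) k) (μ : ι → ℤ) (hf : f ∣ A t μ - A t (-μ)) (i j : ι) (h : p2 (t j) (p3 (t i) f) = 0) :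
    μ i = 0 ↔ μ j = 0 := by
  have hτ : ∀ l, ((p2 (t j)).comp (p3 (t i))) (L 4 (t l)) = C ((t l - t i) * (t l - t j)) * L 2 (t l) := by
    intro l; simp [p3L, p2L]; ring
  have h0 : ((p2 (t j)).comp (p3 (t i))) (A t μ - A t (-μ)) = 0 := by
    obtain ⟨g, hg⟩ := hf
    rw [hg, map_mul]; simp [h]
  rw [map_sub, sub_eq_zero] at h0
  have key : (∃ l, 0 < μ l ∧ (t l - t i) * (t l - t j) = 0) ↔ (∃ l, 0 < (-μ) l ∧ (t l - t i) * (t l - t j) = 0) := by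
    rw [← tA_zero t _ _ hτ, ← tA_zero t _ _ hτ, h0]
  have hh : ∀ l, (t l - t i) * (t l - t j) = 0 ↔ (l = i ∨ l = j) := by
    intro l; rw [mul_eq_zero, sub_eq_zero, sub_eq_zero, ht.eq_iff, ht.eq_iff]
  simp only [hh] at key
  have e : ∀ P : ι → Prop, (∃ l, P l ∧ (l = i ∨ l = j)) ↔ (P i ∨ P j) := by
    intro P; constructor
    · rintro ⟨l, hl, rfl | rfl⟩; exacts [.inl hl, .inr hl]
    · rintro (h | h); exacts [⟨i, h, .inl rfl⟩, ⟨j, h, .inr rfl⟩]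
  rw [e (fun l => 0 < μ l), e (fun l => 0 < (-μ) l)] at key
  have n1 : (-μ) i = - μ i := rfl
  have n2 : (-μ) j = - μ j := rfl
  omega

/-- Step 1 -/
lemma step1 (ht : Function.Injective t) (f : MvPolynomial (Fin 4) k) (μ : ι → ℤ) (hf : f ∣ A t μ - A t (-μ)) (i : ι) (hi : μ i ≠ 0)
    (r : MvPolynomial (Fin 3) k) (hr : Prime r) (hrf : r ∣ p3 (t i) f) :
    ∃ j, j ≠ i ∧ Associated r (L 3 (t j)) := by
  wlog hpos : 0 < μ i generalizing μ
  · exact this (-μ) (by rw [neg_neg, dvd_sub_comm]; exact hf) (by simpa using hi)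
      (by simp; omega)
  have h1 := (tA_zero t (p3 (t i)) (fun j => t j - t i) (fun j => p3L _ _) μ).2 ⟨i, hpos, sub_self _⟩
  have h2 : p3 (t i) f ∣ p3 (t i) (A t (-μ)) := by
    have := map_dvd (p3 (t i)) hf
    rwa [map_sub, h1, zero_sub, dvd_neg] at this
  have h3 := hrf.trans h2
  rw [p_prod t (p3 (t i)) (fun j => t j - t i) (fun j => p3L _ _)] at h3
  rcases hr.dvd_or_dvd h3 with h4 | h4
  · exfalso
    refine hr.not_unit (isUnit_of_dvd_unit h4 ?_)
    refine IsUnit.map C (isUnit_iff_ne_zero.2 (Finset.prod_ne_zero_iff.2 ?_))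
    intro j _ h0
    obtain ⟨h5, h6⟩ := pow_eq_zero_iff'.1 h0
    have := ht (sub_eq_zero.1 h5)
    subst this
    simp at h6; omega
  · obtain ⟨j, _, hj⟩ := (hr.dvd_finset_prod_iff _).1 h4
    have hj0 : ((-μ) j).toNat ≠ 0 := by
      intro h; rw [h, pow_zero] at hj; exact hr.not_unit (isUnit_of_dvd_one hj)
    refine ⟨j, ?_, hr.associated_of_dvd (L3_prime _) (hr.dvd_of_dvd_pow hj)⟩
    rintro rfl
    simp at hj0; omega

lemma assoc_zero (f : MvPolynomial (Fin 4) k) (i j : ι) (r : MvPolynomial (Fin 3) k) (hr : Associated r (L 3 (t j)))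
    (hrf : r ∣ p3 (t i) f) : p2 (t j) (p3 (t i) f) = 0 := by
  have : L 3 (t j) ∣ p3 (t i) f := hr.symm.dvd.trans hrf
  have h2 := map_dvd (p2 (t j)) this
  rw [p2L, sub_self, C_0, zero_mul, zero_dvd_iff] at h2
  exact h2

lemma prime_kernel {S T : Type} [CommRing S] [IsDomain S] [UniqueFactorizationMonoid S] [CommRing T] [IsDomain T] (τ : S →+* T)
    (x : S) (h0 : x ≠ 0) (hx : τ x = 0) : ∃ r, Prime r ∧ r ∣ x ∧ τ r = 0 := by
  induction x using UniqueFactorizationMonoid.induction_on_prime with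
  | h₁ => exact absurd rfl h0
  | h₂ u hu => 
    have := hu.map τ
    rw [hx] at this
    exact absurd this not_isUnit_zero
  | h₃ a p ha hp ih =>
    rw [map_mul, mul_eq_zero] at hx
    rcases hx with hx | hx
    · exact ⟨p, hp, Dvd.intro _ rfl, hx⟩
    · obtain ⟨r, h1, h2, h3⟩ := ih ha hx
      exact ⟨r, h1, h2.mul_left p, h3⟩

theorem gcd_lemma (ht : Function.Injective t) (f : MvPolynomial (Fin 4) k) (hp : Prime f) (hfl : ∀ i, ¬ f ∣ L 4 (t i)) (κ κ' : ι → ℤ)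
    (hκ : ∑ i, κ i = 0) (hκ' : ∑ i, κ' i = 0) (h : f ∣ A t κ - A t (-κ)) (h' : f ∣ A t κ' - A t (-κ')) :
    ∃ a b : ℤ, (a ≠ 0 ∨ b ≠ 0) ∧ ∀ i, a * κ i + b * κ' i = 0 := by
  by_cases k0 : κ = 0
  · exact ⟨1, 0, by simp, by simp [k0]⟩
  obtain ⟨i, hi⟩ : ∃ i, κ i ≠ 0 := by
    by_contra hn; push Not at hn; exact k0 (funext hn)
  set μ : ι → ℤ := fun j => κ' i * κ j - κ i * κ' j with hμ
  by_cases m0 : μ = 0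
  · refine ⟨κ' i, - κ i, Or.inr (by simpa using hi), fun j => ?_⟩
    have := congrFun m0 j
    simp [μ] at this; linarith
  exfalso
  obtain ⟨m, hm⟩ : ∃ m, μ m ≠ 0 := by
    by_contra hn; push Not at hn; exact m0 (funext hn)
  have hcc : constantCoeff f = 0 := by
    obtain ⟨g, hg⟩ := h
    refine constCoeff_zero f g (∑ i, (κ i).toNat) (hg ▸ AB_hom t κ hκ) (hg ▸ A_ne t ht κ k0 hκ) hp.not_unit
  -- f divides for μ
  have hμf : f ∣ A t μ - A t (-μ) := by
    have hI : (Ideal.span {f}).IsPrime := (Ideal.span_singleton_prime hp.ne_zero).2 hp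
    let q : MvPolynomial (Fin 4) k →+* FractionRing (MvPolynomial (Fin 4) k ⧸ Ideal.span {f}) :=
      (algebraMap _ _).comp (Ideal.Quotient.mk (Ideal.span {f}))
    have hq : ∀ x, q x = 0 ↔ f ∣ x := by
      intro x
      rw [← Ideal.mem_span_singleton, ← Ideal.Quotient.eq_zero_iff_mem]
      simp [q]
    have hq0 : ∀ j, q (L 4 (t j)) ≠ 0 := fun j => by rw [ne_eq, hq]; exact hfl j
    have hz : ∀ ν : ι → ℤ, f ∣ A t ν - A t (-ν) ↔ ∏ j, q (L 4 (t j)) ^ (ν j) = 1 := by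
      intro ν
      rw [← hq, map_sub, sub_eq_zero]
      simp only [A, map_prod, map_pow]
      have : ∀ j, q (L 4 (t j)) ^ (ν j) = q (L 4 (t j)) ^ (ν j).toNat / q (L 4 (t j)) ^ ((-ν) j).toNat := by
        intro j
        rw [← zpow_natCast, ← zpow_natCast, ← zpow_sub₀ (hq0 j)]
        congr 1; change ν j = _ - (((-ν j).toNat : ℕ) : ℤ); omega
      simp only [this, Finset.prod_div_distrib]
      rw [div_eq_one_iff_eq]
      exact Finset.prod_ne_zero_iff.2 fun j _ => pow_ne_zero _ (hq0 j)
    rw [hz] at h h' ⊢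
    have : ∀ j, q (L 4 (t j)) ^ (μ j) = (q (L 4 (t j)) ^ (κ j)) ^ (κ' i) / (q (L 4 (t j)) ^ (κ' j)) ^ (κ i) := by
      intro j
      rw [← zpow_mul, ← zpow_mul, ← zpow_sub₀ (hq0 j)]
      congr 1; simp only [μ]; ring
    simp only [this, Finset.prod_div_distrib, Finset.prod_zpow, h, h', one_zpow, div_one]
  have hμi : μ i = 0 := by simp only [μ]; ring
  -- p3 m f nonunit nonzero
  have hnz : ∀ j, p3 (t j) f ≠ 0 → ∃ r, Prime r ∧ r ∣ p3 (t j) f := by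
    intro j hj
    obtain ⟨r, hr, hrd, _⟩ := prime_kernel (constantCoeff (R := k) (σ := Fin 3)) _ hj (by rw [cc_p3, hcc])
    exact ⟨r, hr, hrd⟩
  have hnz' : ∀ (ν : ι → ℤ), f ∣ A t ν - A t (-ν) → ∀ j, ν j ≠ 0 → p3 (t j) f ≠ 0 := by
    intro ν hν j hj h0
    have h1 := tA_zero t (p3 (t j)) (fun l => t l - t j) (fun l => p3L _ _)
    have h2 : p3 (t j) (A t ν) = p3 (t j) (A t (-ν)) := by
      obtain ⟨g, hg⟩ := hν
      rw [← sub_eq_zero, ← map_sub, hg, map_mul, h0, zero_mul]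
    have h3 := h1 ν
    rw [h2, h1 (-ν)] at h3
    have e : ∀ P : ι → Prop, (∃ l, P l ∧ t l - t j = 0) ↔ P j := by
      intro P; constructor
      · rintro ⟨l, hl, hlj⟩
        rwa [ht (sub_eq_zero.1 hlj)] at hl
      · exact fun h => ⟨j, h, sub_self _⟩
    rw [e (fun l => 0 < (-ν) l), e (fun l => 0 < ν l)] at h3
    have n1 : (-ν) j = - ν j := rfl
    omega
  obtain ⟨r, hr, hrd⟩ := hnz m (hnz' μ hμf m hm)
  obtain ⟨h, hhm, hra⟩ := step1 t ht f μ hμf m hm r hr hrd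
  have hz1 := assoc_zero t f m h r hra hrd
  have hμh : μ h ≠ 0 := fun hh => hm ((step2 t ht f μ hμf m h hz1).2 hh)
  have hz2 : ((p1 (t h)).comp (p2 (t m))) (p3 (t i) f) = 0 := by
    change p1 (t h) (p2 (t m) (p3 (t i) f)) = 0
    rw [p_comm, hz1, map_zero]
  obtain ⟨s, hs, hsd, hs0⟩ := prime_kernel ((p1 (t h)).comp (p2 (t m))).toRingHom _ (hnz' κ ‹_› i hi) hz2
  obtain ⟨j, hji, hsj⟩ := step1 t ht f κ ‹_› i hi s hs hsd
  have hz3 := assoc_zero t f i j s hsj hsd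
  have hμj : μ j = 0 := (step2 t ht f μ hμf i j hz3).1 hμi
  have h5 : p1 (t h) (p2 (t m) (L 3 (t j))) = 0 := by
    have h6 : ((p1 (t h)).comp (p2 (t m))).toRingHom s ∣ ((p1 (t h)).comp (p2 (t m))).toRingHom (L 3 (t j)) := map_dvd _ hsj.dvd
    rw [hs0, zero_dvd_iff] at h6
    exact h6
  rw [p2L, map_mul, p1L] at h5
  have h7 : (t j - t m) * (t j - t h) = 0 := by
    by_contra hne
    have : C ((t j - t m) * (t j - t h)) * L 1 (t j) = 0 := by
      rw [← h5]; simp [algC, p1]; ring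
    exact (mul_ne_zero (by rwa [ne_eq, C_eq_zero]) (L_ne 0 _)) this
  rcases mul_eq_zero.1 h7 with h8 | h8
  · rw [ht (sub_eq_zero.1 h8)] at hμj; exact hm hμj
  · rw [ht (sub_eq_zero.1 h8)] at hμj; exact hμh hμj
end FPG

namespace FPD

/-- ambient group -/
@[ext] structure GG (R : Type) [CommRing R] (l : Fin 9 → Rˣ) where
  κ : Fin 9 → ℤ
  v : Fin 3 → R

namespace GG
variable {R : Type} [CommRing R] {l : Fin 9 → Rˣ}

/-- the unit attached to an exponent vector -/
def qq (l : Fin 9 → Rˣ) (κ : Fin 9 → ℤ) : Rˣ := ∏ i, l i ^ κ i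

lemma qq_zero : qq l 0 = 1 := by simp [qq]
lemma qq_add (a b : Fin 9 → ℤ) : qq l (a + b) = qq l a * qq l b := by
  simp [qq, zpow_add, Finset.prod_mul_distrib]
lemma qq_neg (a : Fin 9 → ℤ) : qq l (-a) = (qq l a)⁻¹ := by
  simp [qq, zpow_neg]

instance : Mul (GG R l) := ⟨fun a b => ⟨a.κ + b.κ, fun j => a.v j + (qq l a.κ : R) * b.v j⟩⟩
instance : One (GG R l) := ⟨⟨0, 0⟩⟩
instance : Inv (GG R l) := ⟨fun a => ⟨-a.κ, fun j => - ((qq l (-a.κ) : Rˣ) : R) * a.v j⟩⟩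

lemma mul_k (a b : GG R l) : (a * b).κ = a.κ + b.κ := rfl
lemma mul_v (a b : GG R l) (j) : (a * b).v j = a.v j + (qq l a.κ : R) * b.v j := rfl
lemma one_k : (1 : GG R l).κ = 0 := rfl
lemma one_v (j) : (1 : GG R l).v j = 0 := rfl
lemma inv_k (a : GG R l) : (a⁻¹).κ = - a.κ := rfl
lemma inv_v (a : GG R l) (j) : (a⁻¹).v j = - ((qq l (-a.κ) : Rˣ) : R) * a.v j := rfl

instance : Group (GG R l) := Group.ofLeftAxioms
  (fun a b c => by
    ext j
    · simp only [mul_k, Pi.add_apply]; ring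
    · simp only [mul_v, mul_k, qq_add, Units.val_mul]; ring)
  (fun a => by
    ext j
    · simp [mul_k, one_k]
    · simp [mul_v, one_k, one_v, qq_zero])
  (fun a => by
    ext j
    · simp [mul_k, one_k, inv_k]
    · simp [mul_v, one_v, inv_k, inv_v])

/-- exponent hom -/
def kap : GG R l →* Multiplicative (Fin 9 → ℤ) where
  toFun a := Multiplicative.ofAdd a.κ
  map_one' := rfl
  map_mul' _ _ := rfl

lemma kap_eq_one (a : GG R l) : kap a = 1 ↔ a.κ = 0 := Iff.rfl

/-- character -/
def qh : GG R l →* Rˣ where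
  toFun a := qq l a.κ
  map_one' := qq_zero
  map_mul' a b := qq_add _ _

lemma qh_ker {a : GG R l} (h : a.κ = 0) : qh a = 1 := by
  change qq l a.κ = 1
  rw [h, qq_zero]

lemma conj_v (a c : GG R l) (hc : c.κ = 0) (j) : (a * c * a⁻¹).v j = (qh a : R) * c.v j := by
  have h1 : (qq l (a.κ + c.κ) : R) * ((qq l (-a.κ) : Rˣ) : R) = 1 := by
    rw [← Units.val_mul, ← qq_add, hc]; simp [qq_zero]
  simp only [mul_v, mul_k, inv_v]
  change a.v j + (qq l a.κ : R) * c.v j + _ = (qq l a.κ : R) * _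
  linear_combination (- a.v j) * h1

lemma conj_k (a c : GG R l) : (a * c * a⁻¹).κ = c.κ := by
  simp [mul_k, inv_k]

variable {Γ : Type} [Group Γ]

lemma conj_mem (F : Γ →* GG R l) (hF : Function.Injective F) (c : Γ) (hc : (F c).κ = 0) {J : Type}
    (S : Finset J) (y : J → Γ) (x : Γ) (n : J → ℤ)
    (h : (qh (F x) : R) = ∑ j ∈ S, (n j : R) * (qh (F (y j)) : R)) (T : Subgroup Γ)
    (hT : ∀ j ∈ S, y j * c * (y j)⁻¹ ∈ T) : x * c * x⁻¹ ∈ T := by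
  classical
  have key : ∀ S' ⊆ S, ∃ z ∈ T, (F z).κ = 0 ∧ ∀ i, (F z).v i = (∑ j ∈ S', (n j : R) * (qh (F (y j)) : R)) * (F c).v i := by
    intro S'
    induction S' using Finset.induction_on with
    | empty => intro _; exact ⟨1, one_mem _, by simp [one_k], fun i => by simp [one_v]⟩
    | insert a s ha ih =>
      intro hs
      obtain ⟨z, hz, hz0, hzv⟩ := ih ((Finset.subset_insert _ _).trans hs)
      have hp : ∀ m : ℤ, (F ((y a * c * (y a)⁻¹) ^ m)).κ = 0 ∧
          ∀ i, (F ((y a * c * (y a)⁻¹) ^ m)).v i = (m : R) * ((qh (F (y a)) : R) * (F c).v i) := by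
        have hk : (F (y a * c * (y a)⁻¹)).κ = 0 := by simp only [map_mul, map_inv, conj_k, hc]
        have hv : ∀ i, (F (y a * c * (y a)⁻¹)).v i = ((qh (F (y a)) : R) * (F c).v i) := by
          intro i; simp only [map_mul, map_inv]; rw [conj_v _ _ hc]
        intro m
        induction m with
        | zero => simp [one_k, one_v]
        | succ m ih => 
          rw [zpow_add_one, map_mul]
          refine ⟨by rw [mul_k, ih.1, hk, add_zero], fun i => ?_⟩
          rw [mul_v, ih.1, qq_zero, ih.2, hv]; push_cast; ring
        | pred m ih =>
          rw [zpow_sub_one, map_mul, map_inv]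
          refine ⟨by rw [mul_k, ih.1, inv_k, hk]; simp, fun i => ?_⟩
          rw [mul_v, ih.1, qq_zero, ih.2, inv_v, hv, hk, neg_zero, qq_zero]; push_cast; ring
      refine ⟨z * (y a * c * (y a)⁻¹) ^ (n a), mul_mem hz (zpow_mem (hT a (hs (Finset.mem_insert_self _ _))) _), ?_, ?_⟩
      · rw [map_mul, mul_k, hz0, (hp _).1, add_zero]
      · intro i
        rw [map_mul, mul_v, hz0, qq_zero, hzv, (hp _).2, Finset.sum_insert ha, Units.val_one]; ring
  obtain ⟨z, hz, hz0, hzv⟩ := key S le_rfl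
  have : x * c * x⁻¹ = z := by
    apply hF
    simp only [map_mul, map_inv]
    refine GG.ext ?_ (funext fun i => ?_)
    · rw [conj_k, hc, hz0]
    · rw [conj_v _ _ hc, hzv, h]
  rw [this]; exact hz

lemma comm_ker (a b : GG R l) (ha : a.κ = 0) (hb : b.κ = 0) : a * b = b * a := by
  refine GG.ext ?_ (funext fun i => ?_)
  · simp [mul_k, ha, hb]
  · simp [mul_v, ha, hb, qq_zero]; ring

theorem crit (F : Γ →* GG R l) (hF : Function.Injective F) {E ι : Type} [Finite E] [Finite ι]
    (x : Fin 7 ⊕ E → Γ) (m : ι → Γ) (hm : ∀ i, (F (m i)).κ = 0) (h0 : x (Sum.inl 0) = 1)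
    (htop : Subgroup.closure (Set.range x ∪ Set.range m) = ⊤)
    (hq : ∀ i : Fin 7, ∀ S : Finset (Fin 7), S.card = 4 → ∃ n : Fin 7 → ℤ,
      (qh (F (x (Sum.inl i))) : R) = ∑ j ∈ S, (n j : R) * (qh (F (x (Sum.inl j))) : R))
    (hqE : ∀ e : E, ∀ S : Finset (Fin 7), S.card = 4 → ∃ n : Fin 7 × Fin 7 → ℤ,
      (qh (F (x (Sum.inr e))) : R) =
        ∑ j ∈ S ×ˢ S, (n j : R) * (qh (F (x (Sum.inl j.1) * x (Sum.inl j.2))) : R)) :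
    Group.IsFinitelyPresented Γ := by
  have hmem : ∀ c, c ∈ (kap.comp F).ker ↔ (F c).κ = 0 := fun c => Iff.rfl
  refine FPC.criterion (kap.comp F).ker ?_ x m hm h0 htop ?_ ?_ ?_
  · intro a ha b hb
    apply hF
    rw [map_mul, map_mul]
    exact comm_ker _ _ ha hb
  · intro a b
    rw [MonoidHom.mem_ker]
    simp only [map_mul, map_inv]
    rw [mul_comm ((kap.comp F) (x a))]; simp
  · intro c hc i S hS
    obtain ⟨n, hn⟩ := hq i S hS
    exact conj_mem F hF c hc S (fun j => x (Sum.inl j)) _ n hn _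
      (fun j hj => Subgroup.subset_closure ⟨j, hj, rfl⟩)
  · intro c hc e S hS
    obtain ⟨n, hn⟩ := hqE e S hS
    exact conj_mem F hF c hc (S ×ˢ S) (fun j => x (Sum.inl j.1) * x (Sum.inl j.2)) _ n hn _
      (fun j hj => Subgroup.subset_closure ⟨j.1, (Finset.mem_product.1 hj).1, j.2, (Finset.mem_product.1 hj).2, rfl⟩)

/-- generators -/
def gen (l : Fin 9 → Rˣ) (w : Fin 9 → Fin 3 → R) (i : Fin 9) : GG R l := ⟨Pi.single i 1 - Pi.single 0 1, w i⟩

lemma qh_gen (w : Fin 9 → Fin 3 → R) (i : Fin 9) : qh (gen l w i) = l i * (l 0)⁻¹ := by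
  change qq l (Pi.single i 1 - Pi.single 0 1) = _
  have : ∀ i, qq l (Pi.single i 1) = l i := by
    intro i
    unfold qq
    rw [Finset.prod_eq_single i]
    · simp
    · intro b _ hb; simp [Pi.single_eq_of_ne hb]
    · simp
  rw [sub_eq_add_neg, qq_add, qq_neg, this, this]

lemma gen_zero (w : Fin 9 → Fin 3 → R) (hw : w 0 = 0) : gen l w 0 = 1 := by
  refine GG.ext ?_ (funext fun i => ?_)
  · simp [gen, one_k]
  · simp [gen, hw, one_v]

/-- Lagrange condition -/
def Lag (l : Fin 9 → Rˣ) : Prop := ∀ i : Fin 9, ∀ S : Finset (Fin 7), S.card = 4 →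
  ∃ n : Fin 7 → ℤ, (l i : R) = ∑ j ∈ S, (n j : R) * (l (Fin.castLE (by norm_num) j) : R)

abbrev cs (j : Fin 7) : Fin 9 := Fin.castLE (by norm_num) j

lemma lag_gen (hl : Lag l) (w : Fin 9 → Fin 3 → R) (i : Fin 9) (S : Finset (Fin 7)) (hS : S.card = 4) :
    ∃ n : Fin 7 → ℤ, (qh (gen l w i) : R) = ∑ j ∈ S, (n j : R) * (qh (gen l w (cs j)) : R) := by
  obtain ⟨n, hn⟩ := hl i S hS
  refine ⟨n, ?_⟩
  simp only [qh_gen, Units.val_mul, ← mul_assoc]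
  rw [← Finset.sum_mul, ← hn]

lemma lag_gen2 (hl : Lag l) (w : Fin 9 → Fin 3 → R) (i i' : Fin 9) (S : Finset (Fin 7)) (hS : S.card = 4) :
    ∃ n : Fin 7 × Fin 7 → ℤ, (qh (gen l w i * gen l w i') : R) =
      ∑ j ∈ S ×ˢ S, (n j : R) * (qh (gen l w (cs j.1) * gen l w (cs j.2)) : R) := by
  obtain ⟨n, hn⟩ := lag_gen hl w i S hS
  obtain ⟨n', hn'⟩ := lag_gen hl w i' S hS
  refine ⟨fun j => n j.1 * n' j.2, ?_⟩
  rw [Finset.sum_product, map_mul, Units.val_mul, hn, hn', Finset.sum_mul_sum]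
  refine Finset.sum_congr rfl fun j _ => Finset.sum_congr rfl fun j' _ => ?_
  rw [map_mul, Units.val_mul]; push_cast; ring

end GG
end FPD

namespace FPD
namespace GG
variable {R : Type} [CommRing R] {l : Fin 9 → Rˣ}

/-- the group -/
abbrev G (l : Fin 9 → Rˣ) (w : Fin 9 → Fin 3 → R) : Subgroup (GG R l) := Subgroup.closure (Set.range (gen l w))

/-- generators inside the group -/
def gg (l : Fin 9 → Rˣ) (w : Fin 9 → Fin 3 → R) (i : Fin 9) : G l w := ⟨gen l w i, Subgroup.subset_closure ⟨i, rfl⟩⟩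

/-- the map to the integers -/
def ph0 : GG R l →* Multiplicative ℤ where
  toFun a := Multiplicative.ofAdd (a.κ 7 - a.κ 8)
  map_one' := by simp [one_k]
  map_mul' a b := by
    rw [← ofAdd_add, mul_k]; congr 1; simp only [Pi.add_apply]; ring

/-- restricted to the group -/
def ph (l : Fin 9 → Rˣ) (w : Fin 9 → Fin 3 → R) : G l w →* Multiplicative ℤ := ph0.comp (G l w).subtype

lemma gg_closure (w : Fin 9 → Fin 3 → R) : Subgroup.closure (Set.range (gg l w)) = ⊤ := by
  apply Subgroup.map_injective (G l w).subtype_injective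
  rw [MonoidHom.map_closure, ← MonoidHom.range_eq_map, Subgroup.range_subtype]
  congr 1
  ext x; constructor
  · rintro ⟨_, ⟨i, rfl⟩, rfl⟩; exact ⟨i, rfl⟩
  · rintro ⟨i, rfl⟩; exact ⟨_, ⟨i, rfl⟩, rfl⟩

lemma ph_gg (w : Fin 9 → Fin 3 → R) (i : Fin 9) : ph l w (gg l w i) =
    Multiplicative.ofAdd ((if i = 7 then 1 else 0) - (if i = 8 then 1 else 0)) := by
  change Multiplicative.ofAdd ((Pi.single i 1 - Pi.single 0 1 : Fin 9 → ℤ) 7 - (Pi.single i 1 - Pi.single 0 1 : Fin 9 → ℤ) 8) = _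
  congr 1
  simp [Pi.single_apply, eq_comm]

lemma ph_surj (w : Fin 9 → Fin 3 → R) : Function.Surjective (ph l w) := by
  intro n
  refine ⟨gg l w 7 ^ (Multiplicative.toAdd n), ?_⟩
  rw [map_zpow, ph_gg]
  simp [← ofAdd_zsmul]

theorem G_fp (hl : Lag l) (w : Fin 9 → Fin 3 → R) (hw : w 0 = 0) : Group.IsFinitelyPresented (G l w) := by
  refine crit (G l w).subtype (G l w).subtype_injective (E := Fin 2) (ι := Empty)
    (Sum.elim (fun j => gg l w (cs j)) (fun e => gg l w (Fin.natAdd 7 e))) Empty.elim (fun i => i.elim) ?_ ?_ ?_ ?_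
  · exact Subtype.ext (gen_zero w hw)
  · rw [eq_top_iff, ← gg_closure, Subgroup.closure_le]
    rintro _ ⟨i, rfl⟩
    apply Subgroup.subset_closure
    left
    refine Fin.addCases (m := 7) (n := 2) (motive := fun i => gg l w i ∈ Set.range _) ?_ ?_ i
    · exact fun j => ⟨Sum.inl j, rfl⟩
    · exact fun j => ⟨Sum.inr j, rfl⟩
  · intro i S hS
    exact lag_gen hl w (cs i) S hS
  · intro e S hS
    obtain ⟨n, hn⟩ := lag_gen2 hl w (Fin.natAdd 7 e) 0 S hS
    refine ⟨n, ?_⟩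
    rw [gen_zero w hw, mul_one] at hn
    exact hn

lemma fr_conv {H : Type} [Group H] (h : Group.IsFinitelyPresented H) : IsFinitelyPresented H := by
  obtain ⟨n, s, hs, e⟩ := Group.IsFinitelyPresented.exists_mulEquiv_presentedGroup (G := H)
  exact ⟨n, s, hs, e⟩

/-- generating set of the kernel -/
def Dset (l : Fin 9 → Rˣ) (w : Fin 9 → Fin 3 → R) : Set (G l w) :=
  Set.range (Sum.elim (fun j => gg l w (cs j)) (fun _ : Unit => gg l w 7 * gg l w 8)) ∪
    Set.range (fun p : Fin 9 × Fin 9 => gg l w p.1 * gg l w p.2 * (gg l w p.1)⁻¹ * (gg l w p.2)⁻¹)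

lemma D_norm (hl : Lag l) (w : Fin 9 → Fin 3 → R) : (Subgroup.closure (Dset l w)).Normal := by
  set D := Subgroup.closure (Dset l w) with hD
  set g := gg l w with hg
  have hgD : ∀ j : Fin 7, g (cs j) ∈ D := fun j => Subgroup.subset_closure (Or.inl ⟨Sum.inl j, rfl⟩)
  have hyD : g 7 * g 8 ∈ D := Subgroup.subset_closure (Or.inl ⟨Sum.inr (), rfl⟩)
  have hcD : ∀ i j, g i * g j * (g i)⁻¹ * (g j)⁻¹ ∈ D := fun i j => Subgroup.subset_closure (Or.inr ⟨(i, j), rfl⟩)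
  have hck : ∀ i j, (g i * g j * (g i)⁻¹ * (g j)⁻¹ : G l w).1.κ = 0 := fun i j => by
    change (gen l w i * gen l w j * (gen l w i)⁻¹ * (gen l w j)⁻¹ ).κ = 0
    simp only [mul_k, inv_k]; abel
  obtain ⟨S, hS⟩ : ∃ S : Finset (Fin 7), S.card = 4 := ⟨{0, 1, 2, 3}, rfl⟩
  have c7 : ∀ c ∈ D, c.1.κ = 0 → g 7 * c * (g 7)⁻¹ ∈ D := by
    intro c hc hc0
    obtain ⟨n, hn⟩ := lag_gen hl w 7 S hS
    exact conj_mem (G l w).subtype (G l w).subtype_injective c hc0 S (fun j => g (cs j)) (g 7) n hn D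
      (fun j _ => mul_mem (mul_mem (hgD j) hc) (inv_mem (hgD j)))
  have c7' : ∀ c ∈ D, c.1.κ = 0 → (g 7)⁻¹ * c * g 7 ∈ D := by
    intro c hc hc0
    obtain ⟨n, hn⟩ := lag_gen hl w 8 S hS
    have := conj_mem (G l w).subtype (G l w).subtype_injective c hc0 S (fun j => g (cs j) * (g 7 * g 8)⁻¹) (g 7)⁻¹ n ?_ D
      (fun j _ => by
        have := mul_mem (hgD j) (inv_mem hyD)
        exact mul_mem (mul_mem this hc) (inv_mem this))
    · rwa [inv_inv] at this
    · have e7 : ∀ i, qh ((G l w).subtype (g i)) = qh (gen l w i) := fun i => rfl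
      simp only [map_mul, map_inv, Units.val_mul, e7, ← mul_assoc]
      rw [← Finset.sum_mul, ← hn, ← Units.val_mul, mul_inv]
      congr 1
      rw [mul_comm (qh (gen l w 7))⁻¹, mul_inv_cancel_left]
  have h7 : ∀ x ∈ D, g 7 * x * (g 7)⁻¹ ∈ D := by
    intro x hx
    have : D ≤ D.comap (MulAut.conj (g 7)).toMonoidHom := by
      conv_lhs => rw [hD]
      rw [Subgroup.closure_le]
      rintro _ (⟨j | j, rfl⟩ | ⟨⟨i, j⟩, rfl⟩)
      · change g 7 * g (cs j) * (g 7)⁻¹ ∈ D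
        have := mul_mem (hcD 7 (cs j)) (hgD j)
        simpa using this
      · change g 7 * (g 7 * g 8) * (g 7)⁻¹ ∈ D
        have := mul_mem (c7 _ (hcD 7 8) (hck _ _)) hyD
        convert this using 1; group
      · exact c7 _ (hcD i j) (hck _ _)
    exact this hx
  have h7' : ∀ x ∈ D, (g 7)⁻¹ * x * g 7 ∈ D := by
    intro x hx
    have : D ≤ D.comap (MulAut.conj (g 7)⁻¹).toMonoidHom := by
      conv_lhs => rw [hD]
      rw [Subgroup.closure_le]
      rintro _ (⟨j | j, rfl⟩ | ⟨⟨i, j⟩, rfl⟩)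
      · change (g 7)⁻¹ * g (cs j) * (g 7)⁻¹⁻¹ ∈ D
        have := mul_mem (c7' _ (hcD (cs j) 7) (hck _ _)) (hgD j)
        convert this using 1; group
      · change (g 7)⁻¹ * (g 7 * g 8) * (g 7)⁻¹⁻¹ ∈ D
        have := mul_mem (hcD 8 7) hyD
        convert this using 1; group
      · change (g 7)⁻¹ * _ * (g 7)⁻¹⁻¹ ∈ D
        rw [inv_inv]
        exact c7' _ (hcD i j) (hck _ _)
    have := this hx
    change (g 7)⁻¹ * _ * (g 7)⁻¹⁻¹ ∈ D at this
    rwa [inv_inv] at this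
  rw [← Subgroup.normalizer_eq_top_iff, eq_top_iff, ← gg_closure, Subgroup.closure_le]
  have n7 : g 7 ∈ Subgroup.normalizer (D : Set (G l w)) := by
    rw [Subgroup.mem_normalizer_iff]
    intro x
    refine ⟨fun hx => h7 x hx, fun hx => ?_⟩
    have := h7' _ hx
    convert this using 1; group
  rintro _ ⟨i, rfl⟩
  have hle : D ≤ Subgroup.normalizer (D : Set (G l w)) := Subgroup.le_normalizer
  refine Fin.addCases (m := 7) (n := 2) (motive := fun i => gg l w i ∈ Subgroup.normalizer (D : Set (G l w))) ?_ ?_ i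
  · exact fun j => hle (hgD j)
  · intro j
    fin_cases j
    · exact n7
    · have := mul_mem (inv_mem n7) (hle hyD)
      rwa [inv_mul_cancel_left] at this

lemma D_eq (hl : Lag l) (w : Fin 9 → Fin 3 → R) : Subgroup.closure (Dset l w) = (ph l w).ker := by
  have hn := D_norm hl w
  have hle : Subgroup.closure (Dset l w) ≤ (ph l w).ker := by
    rw [Subgroup.closure_le]
    rintro _ (⟨j | j, rfl⟩ | ⟨⟨i, j⟩, rfl⟩)
    · change ph l w (gg l w (cs j)) = 1
      rw [ph_gg]
      fin_cases j <;> rfl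
    · change ph l w (gg l w 7 * gg l w 8) = 1
      rw [map_mul, ph_gg, ph_gg]; rfl
    · change ph l w (gg l w i * gg l w j * (gg l w i)⁻¹ * (gg l w j)⁻¹) = 1
      simp only [map_mul, map_inv]
      rw [mul_comm (ph l w (gg l w i))]; simp
  refine le_antisymm hle ?_
  · intro x hx
    have hsup : Subgroup.closure (Dset l w) ⊔ Subgroup.zpowers (gg l w 7) = ⊤ := by
      rw [eq_top_iff, ← gg_closure, Subgroup.closure_le]
      rintro _ ⟨i, rfl⟩
      have m7 : gg l w 7 ∈ Subgroup.closure (Dset l w) ⊔ Subgroup.zpowers (gg l w 7) :=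
        (le_sup_right : _ ≤ Subgroup.closure (Dset l w) ⊔ Subgroup.zpowers (gg l w 7)) (Subgroup.mem_zpowers _)
      have hl' := (le_sup_left : _ ≤ Subgroup.closure (Dset l w) ⊔ Subgroup.zpowers (gg l w 7))
      refine Fin.addCases (m := 7) (n := 2) (motive := fun i => gg l w i ∈ Subgroup.closure (Dset l w) ⊔ Subgroup.zpowers (gg l w 7)) ?_ ?_ i
      · exact fun j => hl' (Subgroup.subset_closure (Or.inl ⟨Sum.inl j, rfl⟩))
      · intro j
        fin_cases j
        · exact m7
        · have := mul_mem (inv_mem m7) (hl' (Subgroup.subset_closure (Or.inl ⟨Sum.inr (), rfl⟩)))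
          rwa [Sum.elim_inr, inv_mul_cancel_left] at this
    have hxs : x ∈ Subgroup.closure (Dset l w) ⊔ Subgroup.zpowers (gg l w 7) := by rw [hsup]; trivial
    obtain ⟨d, hd, z, ⟨n, rfl⟩, rfl⟩ := Subgroup.mem_sup_of_normal_left.1 hxs
    have h1 : ph l w d = 1 := hle hd
    rw [MonoidHom.mem_ker, map_mul, h1, one_mul] at hx
    simp only [map_zpow, ph_gg] at hx
    have : n = 0 := by
      rw [← ofAdd_zsmul] at hx
      have := congrArg Multiplicative.toAdd hx
      simpa using this
    subst this
    simpa using hd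

theorem K_fp (hl : Lag l) (w : Fin 9 → Fin 3 → R) (hw : w 0 = 0) : Group.IsFinitelyPresented (ph l w).ker := by
  have hD := D_eq hl w
  have hmem : ∀ x ∈ Dset l w, x ∈ (ph l w).ker := fun x hx => hD ▸ Subgroup.subset_closure hx
  let x : Fin 7 ⊕ Unit → (ph l w).ker := fun s => ⟨Sum.elim (fun j => gg l w (cs j)) (fun _ : Unit => gg l w 7 * gg l w 8) s,
    hmem _ (Or.inl ⟨s, rfl⟩)⟩
  let m : Fin 9 × Fin 9 → (ph l w).ker := fun p => ⟨gg l w p.1 * gg l w p.2 * (gg l w p.1)⁻¹ * (gg l w p.2)⁻¹,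
    hmem _ (Or.inr ⟨p, rfl⟩)⟩
  refine crit ((G l w).subtype.comp (ph l w).ker.subtype)
    ((G l w).subtype_injective.comp (ph l w).ker.subtype_injective) x m ?_ ?_ ?_ ?_ ?_
  · rintro ⟨i, j⟩
    change (gen l w i * gen l w j * (gen l w i)⁻¹ * (gen l w j)⁻¹ ).κ = 0
    simp only [mul_k, inv_k]; abel
  · exact Subtype.ext (Subtype.ext (gen_zero w hw))
  · apply Subgroup.map_injective (ph l w).ker.subtype_injective
    rw [MonoidHom.map_closure, ← MonoidHom.range_eq_map, Subgroup.range_subtype, Set.image_union,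
      ← Set.range_comp, ← Set.range_comp]
    exact hD
  · intro i S hS
    exact lag_gen hl w (cs i) S hS
  · intro e S hS
    exact lag_gen2 hl w 7 8 S hS
end GG
end FPD

namespace FPN

variable {Γ : Type} [Group Γ] {ι : Type}

lemma no_Z2 (kap : Γ →* Multiplicative (ι → ℤ)) (h1 : ∀ g, kap g = 1 → g ^ 19 = 1)
    (h2 : ∀ g h : Γ, g * h = h * g → ∃ a b : ℤ, (a ≠ 0 ∨ b ≠ 0) ∧ kap (g ^ a * h ^ b) = 1) 
    (K : Subgroup Γ) : ¬ Nonempty (K ≃* Multiplicative (ℤ × ℤ)) := by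
  rintro ⟨e⟩
  obtain ⟨a, b, hab, h⟩ := h2 (e.symm (Multiplicative.ofAdd (1, 0))) (e.symm (Multiplicative.ofAdd (0, 1)))
    (by rw [← Subgroup.coe_mul, ← Subgroup.coe_mul, ← map_mul e.symm, ← map_mul e.symm, mul_comm])
  have h3 := h1 _ h
  have h4 : (e.symm (Multiplicative.ofAdd (1, 0)) ^ a * e.symm (Multiplicative.ofAdd (0, 1)) ^ b) ^ 19 = 1 := by
    apply Subtype.ext; exact h3
  have h5 := congrArg e h4
  simp only [map_pow, map_mul, map_zpow, MulEquiv.apply_symm_apply, map_one] at h5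
  have h6 := congrArg Multiplicative.toAdd h5
  simp only [toAdd_pow, toAdd_mul, toAdd_zpow, toAdd_ofAdd, toAdd_one, Prod.ext_iff] at h6
  simp at h6
  omega

/-- generators of BS -/
def bx (m n : ℤ) : BS m n := PresentedGroup.of 0
def bY (m n : ℤ) : BS m n := PresentedGroup.of 1

lemma bs_rel (m n : ℤ) : (bY m n)⁻¹ * bx m n ^ m * bY m n * bx m n ^ (-n) = 1 := by
  have := PresentedGroup.one_of_mem (rels := BSRels m n) (Set.mem_singleton _)
  simpa [PresentedGroup.of, bx, bY] using this

lemma bs_lift {H : Type} [Group H] (m n : ℤ) (x y : H) (h : y⁻¹ * x ^ m * y * x ^ (-n) = 1) :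
    ∃ f : BS m n →* H, f (bx m n) = x ∧ f (bY m n) = y := by
  have hr : ∀ r ∈ BSRels m n, FreeGroup.lift (![x, y] : Fin 2 → H) r = 1 := by
    rintro _ rfl
    simpa using h
  exact ⟨PresentedGroup.toGroup hr, PresentedGroup.toGroup.of hr, PresentedGroup.toGroup.of hr⟩

lemma bx_inf (m n : ℤ) (hm : m ≠ 0) (hn : n ≠ 0) : bx m n ^ 19 ≠ 1 := by
  let x : Equiv.Perm ℚ := Equiv.addRight (1 : ℚ)
  have hmn : (m : ℚ) / n ≠ 0 := div_ne_zero (by exact_mod_cast hm) (by exact_mod_cast hn)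
  have hnq : (n : ℚ) ≠ 0 := by exact_mod_cast hn
  have hmq : (m : ℚ) ≠ 0 := by exact_mod_cast hm
  let y : Equiv.Perm ℚ := Equiv.mulRight₀ ((m : ℚ) / n) hmn
  have hx : ∀ (a : ℤ) (r : ℚ), (x ^ a) r = r + a := by
    have h1 : ∀ r, x r = r + 1 := fun r => rfl
    intro a
    induction a with
    | zero => intro r; simp
    | succ a ih => intro r; rw [zpow_add_one, Equiv.Perm.mul_apply, h1, ih]; push_cast; ring
    | pred a ih =>
      intro r
      have h3 : x⁻¹ r = r - 1 := by rw [Equiv.Perm.inv_eq_iff_eq, h1]; ring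
      rw [zpow_sub_one, Equiv.Perm.mul_apply, h3, ih]; push_cast; ring
  obtain ⟨f, hfx, hfy⟩ := bs_lift m n x y (by
    rw [zpow_neg, mul_inv_eq_one]
    have : x ^ m * y = y * x ^ n := by
      ext r
      simp only [Equiv.Perm.mul_apply, hx]
      simp [y]; field_simp
    rw [mul_assoc, this, inv_mul_cancel_left])
  intro h
  have := congrArg f h
  rw [map_pow, hfx, map_one] at this
  have h2 := congrArg (fun σ : Equiv.Perm ℚ => σ 0) this
  have h3 := hx 19 0
  have e : x ^ (19 : ℤ) = x ^ 19 := zpow_ofNat x 19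
  rw [e] at h3
  simp only [h3] at h2
  norm_num at h2

lemma no_BS (kap : Γ →* Multiplicative (ι → ℤ)) (h1 : ∀ g, kap g = 1 → g ^ 19 = 1)
    (h2 : ∀ g h : Γ, g * h = h * g → ∃ a b : ℤ, (a ≠ 0 ∨ b ≠ 0) ∧ kap (g ^ a * h ^ b) = 1) :
    HasNoBSSubgroup Γ := by
  rintro m n hm hn K ⟨e⟩
  let j : BS m n →* Γ := K.subtype.comp e.symm.toMonoidHom
  have hj : Function.Injective j := K.subtype_injective.comp e.symm.injective
  have hrel := bs_rel m n
  by_cases hmn : m = n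
  · subst hmn
    have hc : bx m m ^ m * bY m m = bY m m * bx m m ^ m := by
      rw [zpow_neg, mul_inv_eq_one, mul_assoc, inv_mul_eq_iff_eq_mul] at hrel
      exact hrel
    obtain ⟨a, b, hab, h⟩ := h2 (j (bx m m ^ m)) (j (bY m m)) (by rw [← map_mul, hc, map_mul])
    have h3 := h1 _ h
    rw [← map_zpow, ← map_zpow, ← map_mul, ← map_pow, ← map_one j] at h3
    have h4 := hj h3
    obtain ⟨f, hfx, hfy⟩ := bs_lift (H := Multiplicative (ℤ × ℤ)) m m (Multiplicative.ofAdd (1, 0)) (Multiplicative.ofAdd (0, 1))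
      (by rw [mul_comm _ (Multiplicative.ofAdd ((1 : ℤ), (0 : ℤ)) ^ m), mul_assoc, mul_assoc]; simp)
    have h5 := congrArg f h4
    simp only [map_pow, map_mul, map_zpow, hfx, hfy, map_one] at h5
    have h6 := congrArg Multiplicative.toAdd h5
    simp only [toAdd_pow, toAdd_mul, toAdd_zpow, toAdd_ofAdd, toAdd_one, Prod.ext_iff] at h6
    simp at h6
    rcases hab with h | h
    · rcases h6.1 with h' | h' <;> contradiction
    · exact h h6.2
  · apply bx_inf m n hm hn
    apply hj
    rw [map_pow, map_one]
    apply h1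
    have h3 := congrArg (fun z => Multiplicative.toAdd (kap (j z))) hrel
    simp only [map_mul, map_inv, map_zpow, map_one, toAdd_mul, toAdd_inv, toAdd_zpow, toAdd_one] at h3
    have h4 : (m - n) • Multiplicative.toAdd (kap (j (bx m n))) = 0 := by
      rw [← h3, sub_smul, neg_smul]; abel
    have h5 : Multiplicative.toAdd (kap (j (bx m n))) = 0 := by
      funext i
      have := congrFun h4 i
      simp only [Pi.smul_apply, Pi.zero_apply, smul_eq_mul, mul_eq_zero] at this
      rcases this with h | h
      · omega
      · exact h
    exact h5
end FPN

namespace FPD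
namespace GG
open MvPolynomial FPG

variable {k : Type} [Field k]

/-- product of the linear forms -/
noncomputable def PI (t : Fin 9 → k) : MvPolynomial (Fin 4) k := ∏ i, L 4 (t i)

variable (t : Fin 9 → k) (R : Type) [CommRing R] [Algebra (MvPolynomial (Fin 4) k) R]
  [IsLocalization.Away (PI t) R]

lemma L_unit (i : Fin 9) : IsUnit (algebraMap (MvPolynomial (Fin 4) k) R (L 4 (t i))) :=
  isUnit_of_dvd_unit (map_dvd _ (show L 4 (t i) ∣ PI t from Finset.dvd_prod_of_mem (fun i => L 4 (t i)) (Finset.mem_univ i)))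
    (IsLocalization.Away.algebraMap_isUnit (S := R) (PI t))

/-- the units -/
noncomputable def ll (i : Fin 9) : Rˣ := (L_unit t R i).unit

lemma ll_val (i : Fin 9) : (ll t R i : R) = algebraMap (MvPolynomial (Fin 4) k) R (L 4 (t i)) := rfl

/-- the translation parts -/
noncomputable def ww (i : Fin 9) (j : Fin 3) : R :=
  algebraMap (MvPolynomial (Fin 4) k) R (C (t i ^ ((j : ℕ) + 1) - t 0 ^ ((j : ℕ) + 1))) * ((ll t R 0)⁻¹ : Rˣ)

lemma ww_zero : ww t R 0 = 0 := by
  funext j; simp [ww]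

lemma sumk (g : GG R (ll t R)) (hg : g ∈ G (ll t R) (ww t R)) : ∑ i, g.κ i = 0 := by
  induction hg using Subgroup.closure_induction with
  | mem x hx =>
    obtain ⟨i, rfl⟩ := hx
    simp [gen]
  | one => simp [one_k]
  | mul x y _ _ hx hy => simp [mul_k, Finset.sum_add_distrib, hx, hy]
  | inv x _ hx => simp [inv_k, hx]

lemma inv_rel (g : GG R (ll t R)) (hg : g ∈ G (ll t R) (ww t R)) :
    ∑ j : Fin 3, g.v j * algebraMap (MvPolynomial (Fin 4) k) R (X j.succ) = (qh g : R) - 1 := by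
  induction hg using Subgroup.closure_induction with
  | mem x hx =>
    obtain ⟨i, rfl⟩ := hx
    have h1 : ((ll t R 0 : Rˣ) : R) * ((ll t R 0)⁻¹ : Rˣ) = 1 := Units.mul_inv _
    rw [qh_gen, Units.val_mul, ll_val, ← h1, ← sub_mul, ll_val, ← map_sub]
    simp only [gen, ww]
    have : L 4 (t i) - L 4 (t 0) = ∑ j : Fin 3, C (t i ^ ((j : ℕ) + 1) - t 0 ^ ((j : ℕ) + 1)) * X j.succ := by
      simp only [L, Fin.sum_univ_succ (n := 3), ← Finset.sum_sub_distrib, map_sub, sub_mul]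
      simp
    rw [this, map_sum, Finset.sum_mul]
    refine Finset.sum_congr rfl fun j _ => ?_
    rw [map_mul]; ring
  | one => simp [one_v]
  | mul x y _ _ hx hy =>
    simp only [mul_v, add_mul, Finset.sum_add_distrib, hx, mul_assoc, ← Finset.mul_sum, hy, map_mul, Units.val_mul]
    change (qh x : R) - 1 + (qh x : R) * _ = _
    ring
  | inv x _ hx =>
    simp only [inv_v, qq_neg, mul_assoc, ← Finset.mul_sum, hx, map_inv]
    change - (((qh x)⁻¹ : Rˣ) : R) * _ = _
    have h1 : (((qh x)⁻¹ : Rˣ) : R) * (qh x : R) = 1 := Units.inv_mul _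
    linear_combination - h1

lemma PI_ne : PI t ≠ 0 := Finset.prod_ne_zero_iff.2 fun i _ => L_ne 3 _

lemma le_nzd : Submonoid.powers (PI t) ≤ nonZeroDivisors (MvPolynomial (Fin 4) k) :=
  powers_le_nonZeroDivisors_of_noZeroDivisors (PI_ne t)

lemma R_dom (t : Fin 9 → k) (R : Type) [CommRing R] [Algebra (MvPolynomial (Fin 4) k) R]
  [IsLocalization.Away (PI t) R] :
    IsDomain R := IsLocalization.isDomain_of_le_nonZeroDivisors R (le_nzd t)

lemma R_inj (t : Fin 9 → k) (R : Type) [CommRing R] [Algebra (MvPolynomial (Fin 4) k) R]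
  [IsLocalization.Away (PI t) R] :
    Function.Injective (algebraMap (MvPolynomial (Fin 4) k) R) :=
  IsLocalization.injective R (le_nzd t)

lemma q_A (κ : Fin 9 → ℤ) : (qq (ll t R) κ : R) * algebraMap _ R (A t (-κ)) = algebraMap _ R (A t κ) := by
  have h : qq (ll t R) κ * ∏ i, ll t R i ^ ((-κ) i).toNat = ∏ i, ll t R i ^ (κ i).toNat := by
    rw [qq, ← Finset.prod_mul_distrib]
    refine Finset.prod_congr rfl fun i _ => ?_
    rw [← zpow_natCast, ← zpow_natCast, ← zpow_add]
    congr 1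
    rw [Pi.neg_apply]; omega
  have h' := congrArg (Units.val) h
  simp only [Units.val_mul, Units.coe_prod, Units.val_pow_eq_pow_val, ll_val] at h'
  simp only [A, map_prod, map_pow]
  exact h'

/-- factor prime lemma -/
lemma nonunit_prime (s : MvPolynomial (Fin 4) k) (h0 : s ≠ 0) (hu : ¬ IsUnit (algebraMap _ R s)) :
    ∃ f, Prime f ∧ f ∣ s ∧ ¬ IsUnit (algebraMap _ R f) := by
  induction s using UniqueFactorizationMonoid.induction_on_prime with
  | h₁ => exact absurd rfl h0
  | h₂ u hu' => exact absurd (hu'.map _) hu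
  | h₃ a p ha hp ih =>
    by_cases h : IsUnit (algebraMap _ R p)
    · have : ¬ IsUnit (algebraMap _ R a) := fun h' => hu (by rw [map_mul]; exact h.mul h')
      obtain ⟨f, h1, h2, h3⟩ := ih ha this
      exact ⟨f, h1, h2.mul_left p, h3⟩
    · exact ⟨p, hp, Dvd.intro _ rfl, h⟩

lemma f_dvd (ht : Function.Injective t) (f : MvPolynomial (Fin 4) k) (hf : Prime f)
    (hu : ¬ IsUnit (algebraMap _ R f)) (κ : Fin 9 → ℤ)
    (h : algebraMap _ R f ∣ (qq (ll t R) κ : R) - 1) : f ∣ A t κ - A t (-κ) := by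
  have h1 : algebraMap _ R f ∣ algebraMap _ R (A t κ - A t (-κ)) := by
    have := h.mul_right (algebraMap _ R (A t (-κ)))
    rwa [sub_mul, q_A, one_mul, ← map_sub] at this
  obtain ⟨r, hr⟩ := h1
  obtain ⟨n, r0, hr0⟩ := IsLocalization.Away.surj (PI t) r
  have h2 : f ∣ (A t κ - A t (-κ)) * PI t ^ n := by
    refine ⟨r0, R_inj t R ?_⟩
    rw [map_mul, hr, map_mul, ← hr0, map_pow]; ring
  rcases hf.dvd_or_dvd h2 with h3 | h3
  · exact h3
  · exfalso
    have := map_dvd (algebraMap _ R) (hf.dvd_of_dvd_pow h3)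
    exact hu (isUnit_of_dvd_unit this (IsLocalization.Away.algebraMap_isUnit (S := R) (PI t)))

lemma q_ne (ht : Function.Injective t) (κ : Fin 9 → ℤ) (hs : ∑ i, κ i = 0) (h : κ ≠ 0) : (qq (ll t R) κ : R) - 1 ≠ 0 := by
  intro h0
  apply A_ne t ht κ h hs
  apply R_inj t R
  rw [map_sub, ← q_A, map_zero]
  linear_combination (algebraMap _ R (A t (-κ))) * h0

lemma rel_prime (ht : Function.Injective t) (κ κ' : Fin 9 → ℤ) (hs : ∑ i, κ i = 0) (hs' : ∑ i, κ' i = 0)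
    (hk : κ ≠ 0) (hind : ¬ ∃ a b : ℤ, (a ≠ 0 ∨ b ≠ 0) ∧ ∀ i, a * κ i + b * κ' i = 0) :
    IsRelPrime ((qq (ll t R) κ : R) - 1) ((qq (ll t R) κ' : R) - 1) := by
  have := R_dom t R
  intro d hd hd'
  by_contra hu
  have hd0 : d ≠ 0 := fun h => q_ne t R ht κ hs hk (zero_dvd_iff.1 (h ▸ hd))
  obtain ⟨n, s, hns⟩ := IsLocalization.Away.surj (PI t) d
  have hPu : IsUnit (algebraMap _ R (PI t) ^ n) := (IsLocalization.Away.algebraMap_isUnit (S := R) (PI t)).pow n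
  have hs0 : s ≠ 0 := by
    rintro rfl
    rw [map_zero] at hns
    exact mul_ne_zero hd0 hPu.ne_zero hns
  obtain ⟨f, hf, hfs, hfu⟩ := nonunit_prime R s hs0 (by
    rw [← hns]; exact fun h => hu (isUnit_of_mul_isUnit_left h))
  have hfd : algebraMap _ R f ∣ d := by
    have := map_dvd (algebraMap _ R) hfs
    rw [← hns] at this
    exact hPu.dvd_mul_right.1 this
  exact hind (gcd_lemma t ht f hf (fun i hi => hfu (isUnit_of_dvd_unit (map_dvd _ hi) (L_unit t R i))) κ κ' hs hs'
    (f_dvd t R ht f hf hfu κ (hfd.trans hd)) (f_dvd t R ht f hf hfu κ' (hfd.trans hd')))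

/-- lifting evaluation -/
lemma theta {E : Type} [Field E] (θ : MvPolynomial (Fin 4) k →+* E) (h : ∀ i, θ (L 4 (t i)) ≠ 0) :
    ∃ Θ : R →+* E, ∀ s, Θ (algebraMap _ R s) = θ s := by
  have : IsUnit (θ (PI t)) := by
    rw [isUnit_iff_ne_zero, PI, map_prod, Finset.prod_ne_zero_iff]; exact fun i _ => h i
  exact ⟨IsLocalization.Away.lift (PI t) this, fun s => IsLocalization.Away.lift_eq (PI t) this s⟩

theorem CL (ht : Function.Injective t) (g h : GG R (ll t R)) (hg : g ∈ G (ll t R) (ww t R))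
    (hh : h ∈ G (ll t R) (ww t R)) (hc : g * h = h * g) :
    ∃ a b : ℤ, (a ≠ 0 ∨ b ≠ 0) ∧ ∀ i, a * g.κ i + b * h.κ i = 0 := by
  by_contra hind
  have hk : g.κ ≠ 0 := fun h0 => hind ⟨1, 0, by simp, by simp [h0]⟩
  have hrp := rel_prime t R ht g.κ h.κ (sumk t R g hg) (sumk t R h hh) hk hind
  have := R_dom t R
  have : UniqueFactorizationMonoid R := UniqueFactorizationMonoid.of_isLocalization (Submonoid.powers (PI t)) R
  have hd : ∀ j, (qq (ll t R) g.κ : R) - 1 ∣ g.v j := by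
    intro j
    have h1 := congrArg (fun x : GG R (ll t R) => x.v j) hc
    simp only [mul_v] at h1
    refine hrp.dvd_of_dvd_mul_left ⟨h.v j, ?_⟩
    linear_combination -h1
  choose u hu using hd
  have h2 := inv_rel t R g hg
  have h3 : ∑ j : Fin 3, u j * algebraMap (MvPolynomial (Fin 4) k) R (X j.succ) = 1 := by
    apply mul_left_cancel₀ (q_ne t R ht g.κ (sumk t R g hg) hk)
    rw [mul_one, Finset.mul_sum]
    change _ = (qh g : R) - 1
    rw [← h2]
    refine Finset.sum_congr rfl fun j _ => ?_
    rw [hu j]; ring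
  obtain ⟨Θ, hΘ⟩ := theta t R (MvPolynomial.eval (fun j : Fin 4 => if j = 0 then (1:k) else 0)) (by
    intro i; simp [L])
  have h4 := congrArg Θ h3
  simp [hΘ, Fin.succ_ne_zero] at h4

lemma pow19 (h19 : (19 : k) = 0) (g : GG R (ll t R)) (hg : g.κ = 0) : g ^ 19 = 1 := by
  have hp : ∀ n : ℕ, (g ^ n).κ = 0 ∧ ∀ i, (g ^ n).v i = n * g.v i := by
    intro n
    induction n with
    | zero => simp [one_k, one_v]
    | succ n ih =>
      rw [pow_succ]
      refine ⟨by rw [mul_k, ih.1, hg, add_zero], fun i => ?_⟩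
      rw [mul_v, ih.1, qq_zero, ih.2]; push_cast; ring
  have h : (19 : R) = 0 := by
    have := congrArg (fun x : k => algebraMap (MvPolynomial (Fin 4) k) R (C x)) h19
    rw [show (19 : k) = ((19 : ℕ) : k) by norm_num] at this
    simp only [map_natCast, map_zero] at this
    exact_mod_cast this
  refine GG.ext (hp 19).1 (funext fun i => ?_)
  rw [(hp 19).2, one_v]; push_cast; rw [h, zero_mul]

lemma lag (ht : Function.Injective t) (hk : ∀ x : k, ∃ n : ℤ, (n : k) = x) : Lag (ll t R) := by
  intro i S hS
  choose z hz using hk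
  have hinj : Set.InjOn (fun j : Fin 7 => t (cs j)) S := fun a _ b _ hab => Fin.castLE_injective _ (ht hab)
  let b : Fin 7 → k := fun j => (Lagrange.basis S (fun j : Fin 7 => t (cs j)) j).eval (t i)
  have hb : ∀ m : Fin 4, t i ^ (m : ℕ) = ∑ j ∈ S, t (cs j) ^ (m : ℕ) * b j := by
    intro m
    have h1 := Lagrange.eq_interpolate (s := S) (v := fun j : Fin 7 => t (cs j)) (f := (Polynomial.X ^ (m : ℕ) : Polynomial k)) hinj
      (by rw [Polynomial.degree_X_pow, hS]; exact_mod_cast m.2)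
    have h2 := congrArg (Polynomial.eval (t i)) h1
    simpa [Lagrange.interpolate_apply, Polynomial.eval_finset_sum, b] using h2
  refine ⟨fun j => z (b j), ?_⟩
  have : L 4 (t i) = ∑ j ∈ S, C (b j) * L 4 (t (cs j)) := by
    simp only [L, Finset.mul_sum]
    rw [Finset.sum_comm]
    refine Finset.sum_congr rfl fun m _ => ?_
    rw [hb, map_sum, Finset.sum_mul]
    refine Finset.sum_congr rfl fun j _ => ?_
    rw [map_mul]; ring
  rw [ll_val, this, map_sum]
  refine Finset.sum_congr rfl fun j _ => ?_
  rw [map_mul, ll_val, ← hz (b j)]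
  simp
end GG
end FPD

namespace FPD
namespace GG
open MvPolynomial FPG

section ring
variable {R : Type} [CommRing R] {l : Fin 9 → Rˣ}

/-- multipliers preserving the kernel part of a subgroup -/
def RR (Γ : Subgroup (GG R l)) : Subring R where
  carrier := {r | ∀ c ∈ Γ, c.κ = 0 → ∃ c' ∈ Γ, c'.κ = 0 ∧ ∀ j, c'.v j = r * c.v j}
  mul_mem' := by
    intro r s hr hs c hc h0
    obtain ⟨c1, h1, h2, h3⟩ := hs c hc h0
    obtain ⟨c2, h4, h5, h6⟩ := hr c1 h1 h2
    exact ⟨c2, h4, h5, fun j => by rw [h6, h3]; ring⟩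
  one_mem' := fun c hc h0 => ⟨c, hc, h0, fun j => by ring⟩
  add_mem' := by
    intro r s hr hs c hc h0
    obtain ⟨c1, h1, h2, h3⟩ := hs c hc h0
    obtain ⟨c2, h4, h5, h6⟩ := hr c hc h0
    refine ⟨c2 * c1, mul_mem h4 h1, by rw [mul_k, h5, h2, add_zero], fun j => ?_⟩
    rw [mul_v, h5, qq_zero, h6, h3, Units.val_one]; ring
  zero_mem' := fun c hc h0 => ⟨1, one_mem _, one_k, fun j => by rw [one_v]; ring⟩
  neg_mem' := by
    intro r hr c hc h0
    obtain ⟨c2, h4, h5, h6⟩ := hr c hc h0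
    refine ⟨c2⁻¹, inv_mem h4, by rw [inv_k, h5, neg_zero], fun j => ?_⟩
    rw [inv_v, h5, neg_zero, qq_zero, h6, Units.val_one]; ring

lemma RR_q (Γ : Subgroup (GG R l)) (g : GG R l) (hg : g ∈ Γ) : (qh g : R) ∈ RR Γ := by
  intro c hc h0
  exact ⟨g * c * g⁻¹, mul_mem (mul_mem hg hc) (inv_mem hg), by rw [conj_k, h0], fun j => conj_v g c h0 j⟩

lemma RR_ll (w : Fin 9 → Fin 3 → R) (i j : Fin 9) : (l i : R) * ((l j)⁻¹ : Rˣ) ∈ RR (G l w) := by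
  have h := RR_q (G l w) (gen l w i * (gen l w j)⁻¹) (mul_mem (gg l w i).2 (inv_mem (gg l w j).2))
  rw [map_mul, map_inv, qh_gen, qh_gen, mul_inv_rev, inv_inv, ← mul_assoc, inv_mul_cancel_right, Units.val_mul] at h
  exact h

lemma comm_v (g h : GG R l) (j) : (g * h * (h * g)⁻¹).v j = ((qh g : R) - 1) * h.v j - ((qh h : R) - 1) * g.v j := by
  have h1 : (qq l (g.κ + h.κ) : R) * ((qq l (-(h.κ + g.κ)) : Rˣ) : R) = 1 := by
    rw [← Units.val_mul, ← qq_add, add_comm h.κ]; simp [qq_zero]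
  change _ = ((qq l g.κ : R) - 1) * h.v j - ((qq l h.κ : R) - 1) * g.v j
  simp only [mul_v, mul_k, inv_v]
  linear_combination (-(h.v j + (qq l h.κ : R) * g.v j)) * h1

end ring

abbrev kk : Type := ZMod 19
instance fact19 : Fact (Nat.Prime 19) := ⟨by norm_num⟩
/-- the nodes -/
def tt (i : Fin 9) : ZMod 19 := 4 ^ (i : ℕ)
lemma tt_inj : Function.Injective tt := by unfold tt; decide
lemma tt_sur : ∀ x : ZMod 19, ∃ n : ℤ, (n : ZMod 19) = x := ZMod.intCast_surjective
lemma tt_orth : ∀ m j : Fin 4, ∑ i, 17 * tt i ^ (9 - (m : ℕ)) * tt i ^ (j : ℕ) = if j = m then 1 else 0 := by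
  unfold tt; decide

lemma X_eq (m : Fin 4) : (X m : MvPolynomial (Fin 4) (ZMod 19)) = ∑ i, C (17 * tt i ^ (9 - (m : ℕ))) * L 4 (tt i) := by
  simp only [L, Finset.mul_sum]
  rw [Finset.sum_comm]
  have : ∀ j : Fin 4, ∑ i, C (17 * tt i ^ (9 - (m : ℕ))) * (C (tt i ^ (j : ℕ)) * X j) =
      C (if j = m then (1 : ZMod 19) else 0) * (X j : MvPolynomial (Fin 4) (ZMod 19)) := by
    intro j
    rw [← tt_orth m j, map_sum, Finset.sum_mul]
    refine Finset.sum_congr rfl fun i _ => ?_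
    simp only [map_mul, mul_assoc]
  rw [Finset.sum_congr rfl fun j _ => this j, Finset.sum_eq_single m]
  · simp
  · intro b _ hb; simp [hb]
  · simp

variable (R : Type) [CommRing R] [Algebra (MvPolynomial (Fin 4) (ZMod 19)) R]
  [IsLocalization.Away (PI tt) R]

lemma RR_X (m : Fin 4) (j : Fin 9) : algebraMap (MvPolynomial (Fin 4) (ZMod 19)) R (X m) * ((ll tt R j)⁻¹ : Rˣ)
    ∈ RR (G (ll tt R) (ww tt R)) := by
  rw [X_eq, map_sum, Finset.sum_mul]
  refine sum_mem fun i _ => ?_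
  obtain ⟨n, hn⟩ := tt_sur (17 * tt i ^ (9 - (m : ℕ)))
  rw [← hn, map_mul, ← ll_val, mul_assoc]
  refine mul_mem ?_ (RR_ll _ _ _)
  simp only [map_intCast]
  exact intCast_mem _ n

/-- coefficient embedding -/
noncomputable abbrev sg : Polynomial (ZMod 19) →+* RatFunc (ZMod 19) := algebraMap _ _
noncomputable abbrev cc : RatFunc (ZMod 19) := sg Polynomial.X
noncomputable abbrev ct (a : ZMod 19) : RatFunc (ZMod 19) := sg (Polynomial.C a)

lemma sg_ne (p : Polynomial (ZMod 19)) (h : p ≠ 0) : sg p ≠ 0 := by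
  intro h0
  exact h (RatFunc.algebraMap_injective _ (h0.trans (map_zero _).symm))

lemma lin_ne (a s : ZMod 19) (hs : s ≠ 0) : ct s - ct a * cc ≠ 0 := by
  rw [← map_mul, ← map_sub]
  apply sg_ne
  intro h
  have := congrArg (fun p => Polynomial.coeff p 0) h
  simp at this
  exact hs this

lemma Theta (a : ZMod 19) : ∃ Θ : R →+* RatFunc (ZMod 19),
    (∀ i, Θ (ll tt R i : R) = ct (tt i ^ 3) - ct a * cc) ∧ (∀ x, Θ (algebraMap (MvPolynomial (Fin 4) (ZMod 19)) R (C x)) = ct x) ∧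
    Θ (algebraMap (MvPolynomial (Fin 4) (ZMod 19)) R (X (0 : Fin 4))) = - ct a * cc ∧ Θ (algebraMap (MvPolynomial (Fin 4) (ZMod 19)) R (X (3 : Fin 4))) = 1 := by
  have hL : ∀ i, eval₂Hom (sg.comp Polynomial.C) ![- ct a * cc, 0, 0, 1] (L 4 (tt i)) = ct (tt i ^ 3) - ct a * cc := by
    intro i
    simp [L, Fin.sum_univ_four]
    ring
  obtain ⟨Θ, hΘ⟩ := theta tt R (eval₂Hom (sg.comp Polynomial.C) ![- ct a * cc, 0, 0, 1]) (fun i => by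
    rw [hL]; apply lin_ne; revert i; unfold tt; decide)
  refine ⟨Θ, fun i => by rw [ll_val, hΘ, hL], fun x => by rw [hΘ]; simp, by rw [hΘ]; simp, by rw [hΘ]; simp⟩

lemma h19 : (19 : RatFunc (ZMod 19)) = 0 := by
  have := congrArg ct (show ((19 : ℕ) : ZMod 19) = 0 by decide)
  simp only [ct, map_natCast, map_zero] at this
  exact_mod_cast this

/-- the discriminant element -/
noncomputable abbrev dd : RatFunc (ZMod 19) := 1 - cc ^ 3

lemma dd_ne : dd ≠ 0 := by
  have : dd = sg (1 - Polynomial.X ^ 3) := by simp [dd]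
  rw [this]
  apply sg_ne
  intro h
  have := congrArg (fun p => Polynomial.coeff p 0) h
  simp at this

lemma dd_inj : Function.Injective (fun n : ℕ => dd⁻¹ ^ n) := by
  have key : ∀ n : ℕ, (dd ^ n) = sg ((1 - Polynomial.X ^ 3) ^ n) := by intro n; simp [dd]
  have hd : (1 - Polynomial.X ^ 3 : Polynomial (ZMod 19)).natDegree = 3 := by compute_degree!
  intro m n h
  simp only [inv_pow, inv_inj, key] at h
  have h2 := congrArg Polynomial.natDegree (RatFunc.algebraMap_injective _ h)
  rw [Polynomial.natDegree_pow, Polynomial.natDegree_pow, hd] at h2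
  omega

lemma prod_one (T : RatFunc (ZMod 19)) (hT : T ^ 3 = 1) : (T - ct 1 * cc) * (T - ct 7 * cc) * (T - ct 11 * cc) = dd := by
  have e1 : ct 1 = 1 := by simp
  have e7 : ct 7 = 7 := by simp [ct, map_ofNat]
  have e11 : ct 11 = 11 := by simp [ct, map_ofNat]
  rw [e1, e7, e11, dd]
  linear_combination hT + (-cc * T ^ 2 + 5 * cc ^ 2 * T - 4 * cc ^ 3) * h19

lemma prod_two (a : ZMod 19) (ha : a ^ 3 = 1) : (ct 1 - ct a * cc) * (ct 7 - ct a * cc) * (ct 11 - ct a * cc) = dd := by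
  have e1 : ct 1 = 1 := by simp
  have e7 : ct 7 = 7 := by simp [ct, map_ofNat]
  have e11 : ct 11 = 11 := by simp [ct, map_ofNat]
  have ea : ct a ^ 3 = 1 := by rw [← map_pow, ← map_pow, ha]; simp
  rw [e1, e7, e11, dd]
  linear_combination (-cc ^ 3) * ea + (4 - 5 * (ct a * cc) + (ct a * cc) ^ 2) * h19

/-- inclusion of the kernel -/
noncomputable def io : (ph (ll tt R) (ww tt R)).ker →* GG R (ll tt R) :=
  (G (ll tt R) (ww tt R)).subtype.comp (ph (ll tt R) (ww tt R)).ker.subtype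

lemma io_mem (c : GG R (ll tt R)) (hc : c ∈ G (ll tt R) (ww tt R)) (h0 : c.κ = 0) : ∃ m, io R m = c := by
  refine ⟨⟨⟨c, hc⟩, ?_⟩, rfl⟩
  change Multiplicative.ofAdd (c.κ 7 - c.κ 8) = 1
  rw [h0]; simp

/-- the three specialisation data -/
structure Sp (a : ZMod 19) where
  Θ : R →+* RatFunc (ZMod 19)
  h1 : ∀ i, Θ (ll tt R i : R) = ct (tt i ^ 3) - ct a * cc
  h2 : ∀ x, Θ (algebraMap (MvPolynomial (Fin 4) (ZMod 19)) R (C x)) = ct x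
  h3 : Θ (algebraMap (MvPolynomial (Fin 4) (ZMod 19)) R (X (0 : Fin 4))) = - ct a * cc
  h4 : Θ (algebraMap (MvPolynomial (Fin 4) (ZMod 19)) R (X (3 : Fin 4))) = 1

variable {R}

lemma Sp.linv {a : ZMod 19} (s : Sp R a) (i : Fin 9) :
    s.Θ (((ll tt R i)⁻¹ : Rˣ) : R) = (ct (tt i ^ 3) - ct a * cc)⁻¹ := by
  apply eq_inv_of_mul_eq_one_left
  rw [← s.h1, ← map_mul, Units.inv_mul, map_one]

lemma Sp.three {a : ZMod 19} (ha : a ^ 3 = 1) (s : Sp R a) :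
    s.Θ (((ll tt R 0)⁻¹ : Rˣ) : R) * s.Θ (((ll tt R 1)⁻¹ : Rˣ) : R) * s.Θ (((ll tt R 2)⁻¹ : Rˣ) : R) = dd⁻¹ := by
  rw [s.linv, s.linv, s.linv, ← mul_inv, ← mul_inv, ← prod_two a ha]
  rfl

/-- character -/
noncomputable def Sp.chi {a : ZMod 19} (s : Sp R a) : (ph (ll tt R) (ww tt R)).ker →* RatFunc (ZMod 19) :=
  (s.Θ : R →* RatFunc (ZMod 19)).comp ((Units.coeHom R).comp (qh.comp (io R)))

/-- cocycle -/
noncomputable def Sp.u {a : ZMod 19} (s : Sp R a) (h : (ph (ll tt R) (ww tt R)).ker) : RatFunc (ZMod 19) :=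
  s.Θ ((io R h).v 0)

lemma Sp.hu {a : ZMod 19} (s : Sp R a) (g h) : s.u (g * h) = s.u g + s.chi g * s.u h := by
  simp only [Sp.u, map_mul, mul_v, map_add]
  rfl

lemma chi_one (s1 : Sp R 1) (s2 : Sp R 7) (s3 : Sp R 11) (g) : s1.chi g * s2.chi g * s3.chi g = 1 := by
  have hle : G (ll tt R) (ww tt R) ≤
      (((Units.map (s1.Θ : R →* RatFunc (ZMod 19))) * (Units.map (s2.Θ : R →* RatFunc (ZMod 19))) *
        (Units.map (s3.Θ : R →* RatFunc (ZMod 19)))).comp (qh (l := ll tt R))).ker := by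
    rw [G, Subgroup.closure_le]
    rintro _ ⟨i, rfl⟩
    have hc : ∀ i : Fin 9, (ct (tt i ^ 3)) ^ 3 = 1 := by
      intro i
      rw [← map_pow, ← map_pow, show (tt i ^ 3) ^ 3 = 1 by revert i; unfold tt; decide]; simp
    rw [SetLike.mem_coe, MonoidHom.mem_ker, MonoidHom.comp_apply, qh_gen, map_mul, map_inv, mul_inv_eq_one]
    ext
    simp only [MonoidHom.mul_apply, Units.val_mul, Units.coe_map]
    change s1.Θ _ * s2.Θ _ * s3.Θ _ = s1.Θ _ * s2.Θ _ * s3.Θ _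
    rw [s1.h1, s2.h1, s3.h1, s1.h1, s2.h1, s3.h1, prod_one _ (hc i), prod_one _ (hc 0)]
  have := hle g.1.2
  rw [MonoidHom.mem_ker] at this
  exact congrArg Units.val this

lemma exists_m : ∃ m : ℕ → Fin 3 → (ph (ll tt R) (ww tt R)).ker, (∀ n j, (io R (m n j)).κ = 0) ∧
    ∀ a : ZMod 19, a ^ 3 = 1 → ∀ s : Sp R a, ∃ W, W ≠ 0 ∧ ∀ n, s.u (m n 0) = W ∧ s.u (m n 1) = (- ct a * cc * dd⁻¹) * W ∧
      s.u (m n 2) = ((ct a * cc) ^ 2 * dd⁻¹ * dd⁻¹ ^ n) * W := by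
  let g := gen (ll tt R) (ww tt R)
  have hgm : ∀ i, g i ∈ G (ll tt R) (ww tt R) := fun i => (gg (ll tt R) (ww tt R) i).2
  have hc0 : g 1 * g 2 * (g 2 * g 1)⁻¹ ∈ G (ll tt R) (ww tt R) :=
    mul_mem (mul_mem (hgm 1) (hgm 2)) (inv_mem (mul_mem (hgm 2) (hgm 1)))
  have hk0 : (g 1 * g 2 * (g 2 * g 1)⁻¹).κ = 0 := by
    simp only [mul_k, inv_k]; abel
  obtain ⟨m0, hm0⟩ := io_mem R _ hc0 hk0
  let x (i : Fin 4) (j : Fin 9) : R := algebraMap (MvPolynomial (Fin 4) (ZMod 19)) R (X i) * ((ll tt R j)⁻¹ : Rˣ)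
  have hx : ∀ i j, x i j ∈ RR (G (ll tt R) (ww tt R)) := fun i j => RR_X R i j
  have hr2 : x 0 0 * x 3 1 * x 3 2 ∈ RR (G (ll tt R) (ww tt R)) := mul_mem (mul_mem (hx _ _) (hx _ _)) (hx _ _)
  have hr3 : ∀ n : ℕ, (x 0 0 * x 0 1 * x 3 2) * (x 3 0 * x 3 1 * x 3 2) ^ n ∈ RR (G (ll tt R) (ww tt R)) := fun n =>
    mul_mem (mul_mem (mul_mem (hx _ _) (hx _ _)) (hx _ _)) (pow_mem (mul_mem (mul_mem (hx _ _) (hx _ _)) (hx _ _)) n)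
  obtain ⟨c2, hc2, hk2, hv2⟩ := hr2 _ hc0 hk0
  obtain ⟨m2, hm2⟩ := io_mem R _ hc2 hk2
  choose c3 hc3 hk3 hv3 using fun n => hr3 n _ hc0 hk0
  choose m3 hm3 using fun n => io_mem R _ (hc3 n) (hk3 n)
  refine ⟨fun n => ![m0, m2, m3 n], ?_, ?_⟩
  · intro n j
    fin_cases j
    · change (io R m0).κ = 0
      rw [hm0, hk0]
    · change (io R m2).κ = 0
      rw [hm2, hk2]
    · change (io R (m3 n)).κ = 0
      rw [hm3, hk3]
  intro a ha s
  have hthree := s.three ha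
  have hl : ct 1 - ct a * cc ≠ 0 := lin_ne a 1 (by decide)
  refine ⟨s.u m0, ?_, fun n => ⟨rfl, ?_, ?_⟩⟩
  · have e1 : ct 1 = 1 := by simp
    have e7 : ct 7 = 7 := by simp [ct, map_ofNat]
    have e11 : ct 11 = 11 := by simp [ct, map_ofNat]
    have e3 : ct 3 = 3 := by simp [ct, map_ofNat]
    have e15 : ct 15 = 15 := by simp [ct, map_ofNat]
    have hs3 : ct 3 ≠ 0 := by
      apply sg_ne; rw [Ne, Polynomial.C_eq_zero]; decide
    rw [e3] at hs3
    have hv : s.u m0 = 3 * ((ct 1 - ct a * cc)⁻¹) ^ 2 := by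
      rw [Sp.u, hm0, comm_v, map_sub, map_mul, map_mul, map_sub, map_sub, map_one]
      have hq : ∀ i, s.Θ (qh (g i) : R) = (ct (tt i ^ 3) - ct a * cc) * (ct 1 - ct a * cc)⁻¹ := by
        intro i
        rw [qh_gen, Units.val_mul, map_mul, s.h1, s.linv]; rfl
      have hw : ∀ i, s.Θ ((g i).v 0) = ct (tt i - 1) * (ct 1 - ct a * cc)⁻¹ := by
        intro i
        change s.Θ (ww tt R i 0) = _
        rw [ww, map_mul, s.h2, s.linv]
        simp [tt]
      rw [hq, hq, hw, hw, show tt 1 ^ 3 = 7 by decide, show tt 2 ^ 3 = 11 by decide, show tt 1 - 1 = 3 by decide,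
        show tt 2 - 1 = 15 by decide, e7, e11, e3, e15]
      rw [e1] at hl ⊢
      have := h19
      field_simp
      linear_combination 3 * h19
    rw [hv]
    exact mul_ne_zero hs3 (pow_ne_zero _ (inv_ne_zero hl))
  · change s.Θ ((io R m2).v 0) = _
    rw [hm2, hv2, Sp.u, hm0]
    simp only [map_mul, x, s.h3, s.h4]
    rw [← hthree]; ring
  · change s.Θ ((io R (m3 n)).v 0) = _
    rw [hm3, hv3, Sp.u, hm0]
    simp only [map_mul, map_pow, x, s.h3, s.h4]
    rw [← hthree]; ring

theorem K_not_FP3 : ¬ IsTypeFP3 (ph (ll tt R) (ww tt R)).ker := by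
  intro hFP
  obtain ⟨Θ1, a1, b1, c1, d1⟩ := Theta R 1
  obtain ⟨Θ2, a2, b2, c2, d2⟩ := Theta R 7
  obtain ⟨Θ3, a3, b3, c3, d3⟩ := Theta R 11
  let s1 : Sp R 1 := ⟨Θ1, a1, b1, c1, d1⟩
  let s2 : Sp R 7 := ⟨Θ2, a2, b2, c2, d2⟩
  let s3 : Sp R 11 := ⟨Θ3, a3, b3, c3, d3⟩
  have hone : ∀ {a : ZMod 19} (s : Sp R a), ∀ g ∈ (kap.comp (io R)).ker, s.chi g = 1 := by
    intro a s g hg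
    change s.Θ (qh (io R g) : R) = 1
    rw [qh_ker ((kap_eq_one _).1 hg)]; simp
  obtain ⟨F, hF, hmem⟩ := FPB.fp3 hFP 19 s1.chi s2.chi s3.chi (chi_one s1 s2 s3) s1.u s2.u s3.u s1.hu s2.hu s3.hu
    (kap.comp (io R)).ker (by
      intro a ha b hb
      apply Subtype.ext; apply Subtype.ext
      exact comm_ker (io R a) (io R b) ((kap_eq_one _).1 ha) ((kap_eq_one _).1 hb)) (hone s1) (hone s2) (hone s3)
  obtain ⟨m, hm, hW⟩ := exists_m (R := R)
  obtain ⟨W1, hW1, h1⟩ := hW 1 (by decide) s1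
  obtain ⟨W2, hW2, h2⟩ := hW 7 (by decide) s2
  obtain ⟨W3, hW3, h3⟩ := hW 11 (by decide) s3
  have e1 : ct 1 = 1 := by simp
  have e7 : ct 7 = 7 := by simp [ct, map_ofNat]
  have e11 : ct 11 = 11 := by simp [ct, map_ofNat]
  have hcc : cc ≠ 0 := sg_ne _ Polynomial.X_ne_zero
  have hs240 : (240 : RatFunc (ZMod 19)) ≠ 0 := by
    have : ct 240 ≠ 0 := by apply sg_ne; rw [Ne, Polynomial.C_eq_zero]; decide
    rwa [show ct 240 = 240 by simp [ct, map_ofNat]] at this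
  have hZ : -(240 * (W1 * W2 * W3) * cc ^ 3 * dd⁻¹ ^ 2) ≠ 0 := by
    have := inv_ne_zero dd_ne
    exact neg_ne_zero.2 (mul_ne_zero (mul_ne_zero (mul_ne_zero hs240 (mul_ne_zero (mul_ne_zero hW1 hW2) hW3))
      (pow_ne_zero _ hcc)) (pow_ne_zero _ this))
  have hall : ∀ n : ℕ, -(240 * (W1 * W2 * W3) * cc ^ 3 * dd⁻¹ ^ 2) * dd⁻¹ ^ n ∈ F := by
    intro n
    have := hmem (m n 0) (hm n 0) (m n 1) (hm n 1) (m n 2) (hm n 2)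
    rw [(h1 n).1, (h1 n).2.1, (h1 n).2.2, (h2 n).1, (h2 n).2.1, (h2 n).2.2, (h3 n).1, (h3 n).2.1, (h3 n).2.2,
      e1, e7, e11] at this
    convert this using 1
    ring
  exact Set.infinite_of_injective_forall_mem (f := fun n : ℕ => -(240 * (W1 * W2 * W3) * cc ^ 3 * dd⁻¹ ^ 2) * dd⁻¹ ^ n)
    (fun i j h => dd_inj (mul_left_cancel₀ hZ h)) hall hF

end GG
end FPD

namespace FPD
namespace GG
open MvPolynomial FPG

lemma zpow_k {R : Type} [CommRing R] {l : Fin 9 → Rˣ} (g : GG R l) (n : ℤ) (i) : (g ^ n).κ i = n * g.κ i := by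
  have h := congrArg (fun x : Multiplicative (Fin 9 → ℤ) => (Multiplicative.toAdd x : Fin 9 → ℤ) i) (map_zpow (kap (l := l)) g n)
  change (g ^ n).κ i = n • g.κ i at h
  rw [h, smul_eq_mul]

abbrev R0 : Type := Localization.Away (PI tt)
abbrev G0 : Type := G (ll tt R0) (ww tt R0)
noncomputable abbrev kap0 : G0 →* Multiplicative (Fin 9 → ℤ) := kap.comp (G (ll tt R0) (ww tt R0)).subtype

lemma G0_h1 (g : G0) (h : kap0 g = 1) : g ^ 19 = 1 := by
  apply Subtype.ext
  exact pow19 tt R0 (by decide) g.1 ((kap_eq_one _).1 h)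

lemma G0_h2 (g h : G0) (hc : g * h = h * g) : ∃ a b : ℤ, (a ≠ 0 ∨ b ≠ 0) ∧ kap0 (g ^ a * h ^ b) = 1 := by
  obtain ⟨a, b, hab, hi⟩ := CL tt R0 tt_inj g.1 h.1 g.2 h.2 (congrArg Subtype.val hc)
  refine ⟨a, b, hab, ?_⟩
  change kap (g.1 ^ a * h.1 ^ b) = 1
  rw [kap_eq_one, mul_k]
  funext i
  rw [Pi.add_apply, zpow_k, zpow_k]
  exact hi i

end GG
end FPD

open FPD.GG

/-- There is a finitely presented group `G` with no Baumslag–Solitar subgroups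
(in particular no `ℤ × ℤ` subgroup) and a surjection `φ : G → ℤ` whose kernel is
finitely presented but not of type `FP₃` over `ℤ`. -/
theorem exists_fp_group_with_finitelyPresented_not_FP3_kernel :
    ∃ (G : Type) (_ : Group G),
      IsFinitelyPresented G ∧
      HasNoBSSubgroup G ∧
      (∀ K : Subgroup G, ¬ Nonempty (K ≃* Multiplicative (ℤ × ℤ))) ∧
      ∃ φ : G →* Multiplicative ℤ,
        Function.Surjective φ ∧
        IsFinitelyPresented φ.ker ∧
        ¬ IsTypeFP3 φ.ker := by
  have hl : Lag (ll tt R0) := lag tt R0 tt_inj tt_sur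
  exact ⟨G0, inferInstance, fr_conv (G_fp hl _ (ww_zero tt R0)), FPN.no_BS kap0 G0_h1 G0_h2,
    FPN.no_Z2 kap0 G0_h1 G0_h2, ph _ _, ph_surj _, fr_conv (K_fp hl _ (ww_zero tt R0)), K_not_FP3⟩
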